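/- Let a = (a_ij) be a symmetrizable indecomposable generalized Cartan matrix with symmetrizer d, g = g(a) the associated Kac–Moody algebra, q ∈ k^× and q = (q_ij) any braiding matrix with q_ii = q^{d_i} and q_ij q_ji = q^{d_i a_ij}. Let B̆_q = T(V)/⟨(ad_c x_i)^{1−a_ij} x_j : i ≠ j⟩. Then GK-dim B̆_q ≥ dim g^+, where g^+ is the positive part of the triangular decomposition. -/

import Mathlib

noncomputable section

open scoped ENNReal

namespace Stmt16

/-- The Gelfand–Kirillov dimension of a `k`-algebra `A`. -/
def GKdim (k A : Type*) [Field k] [Ring A] [Algebra k A] : ℝ≥0∞ :=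
  ⨆ S : Finset A,
    Filter.limsup
      (fun n : ℕ => ENNReal.ofReal (Real.logb n
        (Module.finrank k ((Submodule.span k (insert (1 : A) (S : Set A))) ^ n : Submodule k A))))
      Filter.atTop

variable {k : Type*} [Field k] {n : ℕ}

/-- The bicharacter on `ℤ^n` extending a braiding matrix `Q`. -/
def qb (Q : Fin n → Fin n → kˣ) (α β : Fin n → ℤ) : kˣ :=
  ∏ a, ∏ b, Q a b ^ (α a * β b)

/-- Degree of the generator `x_a`. -/
def ee (a : Fin n) : Fin n → ℤ := Pi.single a 1

/-- Braided commutator of homogeneous elements carried with their degrees. -/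
def brk (Q : Fin n → Fin n → kˣ) (p r : FreeAlgebra k (Fin n) × (Fin n → ℤ)) :
    FreeAlgebra k (Fin n) × (Fin n → ℤ) :=
  (p.1 * r.1 - (qb Q p.2 r.2 : k) • (r.1 * p.1), p.2 + r.2)

/-- The generator `x_a` together with its degree. -/
def gen (Q : Fin n → Fin n → kˣ) (a : Fin n) : FreeAlgebra k (Fin n) × (Fin n → ℤ) :=
  (FreeAlgebra.ι k a, ee a)

/-- The iterated braided adjoint `(ad_c x_i)^m` applied to a homogeneous element. -/
def adIter (Q : Fin n → Fin n → kˣ) (i : Fin n) :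
    ℕ → FreeAlgebra k (Fin n) × (Fin n → ℤ) → FreeAlgebra k (Fin n) × (Fin n → ℤ)
  | 0, p => p
  | m + 1, p => brk Q (gen Q i) (adIter Q i m p)

end Stmt16

open Stmt16

/-!
Lift `Q` to `k⟦X⟧` by deforming `q` to `q + X`, which is not a root of unity. Over `k⟦X⟧` the
letters act on the quantum shuffle algebra by left multiplications satisfying the quantum Serre
relations. These relations persist on the subalgebra generated by the letters and on its
specialization at `X = 0`, where `B̆` therefore acts. By Nakayama's lemma `B̆` grows at least as
fast as the ranks over `k⟦X⟧`.

Each initial segment of a reduced word `w` gives an extremal vector in the shuffle algebra. The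
monomials in these vectors are distinguished by their strings, the successive maximal powers of
the skew derivations along `w`. So they are linearly independent, and the growth has degree at
least the length of `w`. On the other side, the simple reflections preserve the dimensions of the
root spaces of `g⁺`, those of the simple roots excepted. So either there are reduced words of
every length, or a longest one sends every positive root to a negative one; then all roots are
real, and its length is at least `dim g⁺`.
-/

namespace Stmt16

/-! ### The root lattice -/

/-- Generalized Cartan matrices, indexed by `Fin n`. -/
structure IsGCM {n : ℕ} (A : Matrix (Fin n) (Fin n) ℤ) : Prop where
  diag : ∀ i, A i i = 2
  nonpos : ∀ i j, i ≠ j → A i j ≤ 0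
  zero_iff : ∀ i j, A i j = 0 ↔ A j i = 0

section RootLattice

variable {n : ℕ}

theorem ee_apply (i j : Fin n) : ee i j = if j = i then 1 else 0 := by
  simp [ee, Pi.single_apply]

theorem eq_sum_smul_ee (β : Fin n → ℤ) : β = ∑ j, β j • ee j := by
  ext l
  simp [ee_apply]

variable (A : Matrix (Fin n) (Fin n) ℤ)

/-- The `i`-th simple coroot, as a functional on the root lattice `ℤⁿ`. -/
def coroot (i : Fin n) : Module.Dual ℤ (Fin n → ℤ) := LinearMap.proj i ∘ₗ A.mulVecLin

@[simp] theorem coroot_ee (i j : Fin n) : coroot A i (ee j) = A i j := by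
  simp [coroot, ee]

/-- The reflection of the root lattice in the `i`-th simple root (an involution if `A i i = 2`). -/
def simpleReflection (i : Fin n) : Module.End ℤ (Fin n → ℤ) :=
  Module.preReflection (ee i) (coroot A i)

theorem simpleReflection_apply (i : Fin n) (β : Fin n → ℤ) :
    simpleReflection A i β = β - coroot A i β • ee i := rfl

/-- The product `s_{i₁} ⋯ s_{iₘ}` of the simple reflections along a word `[i₁, …, iₘ]`. -/
def wordReflection (w : List (Fin n)) : Module.End ℤ (Fin n → ℤ) :=
  (w.map (simpleReflection A)).prod

/-- The product `s_{iₘ} ⋯ s_{i₁}`, inverse to `wordReflection A [i₁, …, iₘ]`. -/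
def wordReflectionInv (w : List (Fin n)) : Module.End ℤ (Fin n → ℤ) :=
  wordReflection A w.reverse

@[simp] theorem wordReflection_nil : wordReflection A [] = 1 := rfl

@[simp] theorem wordReflection_cons (i : Fin n) (w : List (Fin n)) :
    wordReflection A (i :: w) = simpleReflection A i * wordReflection A w := by
  simp [wordReflection]

@[simp] theorem wordReflection_append (v w : List (Fin n)) :
    wordReflection A (v ++ w) = wordReflection A v * wordReflection A w := by
  simp [wordReflection]

@[simp] theorem wordReflectionInv_nil : wordReflectionInv A [] = 1 := rfl

@[simp] theorem wordReflectionInv_cons (i : Fin n) (w : List (Fin n)) :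
    wordReflectionInv A (i :: w) = wordReflectionInv A w * simpleReflection A i := by
  simp [wordReflectionInv]

@[simp] theorem wordReflectionInv_append (v w : List (Fin n)) :
    wordReflectionInv A (v ++ w) = wordReflectionInv A w * wordReflectionInv A v := by
  simp [wordReflectionInv]

variable {A}

theorem simpleReflection_ee_self (hdiag : ∀ i, A i i = 2) (i : Fin n) :
    simpleReflection A i (ee i) = -ee i :=
  Module.preReflection_apply_self (by rw [coroot_ee, hdiag])

theorem simpleReflection_mul_self (hdiag : ∀ i, A i i = 2) (i : Fin n) :
    simpleReflection A i * simpleReflection A i = 1 :=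
  LinearMap.ext (Module.involutive_preReflection (by rw [coroot_ee, hdiag]))

theorem simpleReflection_simpleReflection (hdiag : ∀ i, A i i = 2) (i : Fin n)
    (β : Fin n → ℤ) : simpleReflection A i (simpleReflection A i β) = β :=
  LinearMap.congr_fun (simpleReflection_mul_self hdiag i) β

theorem wordReflection_mul_inv (hdiag : ∀ i, A i i = 2) (w : List (Fin n)) :
    wordReflection A w * wordReflectionInv A w = 1 := by
  induction w with
  | nil => simp
  | cons i w ih =>
    rw [wordReflection_cons, wordReflectionInv_cons, mul_assoc, ← mul_assoc (wordReflection A w),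
      ih, one_mul, simpleReflection_mul_self hdiag]

theorem wordReflection_nonpos {w : List (Fin n)} (h : ∀ j, wordReflection A w (ee j) ≤ 0)
    {β : Fin n → ℤ} (hβ : 0 ≤ β) : wordReflection A w β ≤ 0 := by
  rw [eq_sum_smul_ee β, map_sum]
  refine Finset.sum_nonpos fun j _ => ?_
  rw [map_zsmul]
  exact smul_nonpos_of_nonneg_of_nonpos (hβ j) (h j)

end RootLattice

/-! ### Strings of `sl₂` -/

section SlTwoStrings

section TorsionFree

variable {R M : Type*} [CommRing R] [IsDomain R] [AddCommGroup M] [Module R M]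
  [Module.IsTorsionFree R M] {e f : Module.End R M}

theorem eq_zero_of_pow_apply_eq_zero_of_apply_eq_zero {x : M} {m : ℕ} (hx : e x = 0)
    (hef : ∀ s < m, ∃ a b : R, b ≠ 0 ∧
      e ((f ^ (s + 1)) x) = a • (f ^ (s + 1)) (e x) + b • (f ^ s) x)
    (hm : (f ^ m) x = 0) : x = 0 := by
  induction m with
  | zero => simpa using hm
  | succ m ih =>
    refine ih (fun s hs => hef s (hs.trans m.lt_succ_self)) ?_
    obtain ⟨a, b, hb, h⟩ := hef m m.lt_succ_self
    rw [hm, hx, map_zero, map_zero, smul_zero, zero_add] at h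
    exact (smul_eq_zero.1 h.symm).resolve_left hb

/-- On the part of weight `m ≥ 0` of a torsion-free module over `sl₂` or its quantizations on which
`e` is locally nilpotent, `f ^ m` is injective. The weight of `P t` is `c + 2 * t`, and the
commutation relation of `e` with the powers of `f` is only assumed up to scalars. -/
theorem eq_zero_of_pow_apply_eq_zero {P : ℤ → Submodule R M} {c : ℤ}
    (he : ∀ t, ∀ x ∈ P t, e x ∈ P (t + 1))
    (hef : ∀ t, ∀ x ∈ P t, ∀ s : ℕ, ∃ a b : R, a ≠ 0 ∧ (s < c + 2 * t → b ≠ 0) ∧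
      e ((f ^ (s + 1)) x) = a • (f ^ (s + 1)) (e x) + b • (f ^ s) x)
    {N m : ℕ} {t : ℤ} {x : M} (hx : x ∈ P t) (hm : c + 2 * t = m) (hN : (e ^ N) x = 0)
    (hf : (f ^ m) x = 0) : x = 0 := by
  induction N generalizing m t x with
  | zero => simpa using hN
  | succ N ih =>
    have hf' : ∀ r, (f ^ (m + r)) x = 0 := fun r => by
      rw [add_comm, pow_add, Module.End.mul_apply, hf, map_zero]
    have hex : e x = 0 := by
      refine ih (m := m + 2) (he t x hx) (by push_cast; linarith) (by rwa [pow_succ] at hN) ?_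
      obtain ⟨a, b, ha, -, h⟩ := hef t x hx (m + 1)
      rw [add_assoc, hf', hf', map_zero, smul_zero, add_zero] at h
      exact (smul_eq_zero.1 h.symm).resolve_left ha
    refine eq_zero_of_pow_apply_eq_zero_of_apply_eq_zero hex (fun s hs => ?_) hf
    obtain ⟨a, b, -, hb, h⟩ := hef t x hx s
    exact ⟨a, b, hb (by omega), h⟩

end TorsionFree

variable {k V : Type*} [Field k] [AddCommGroup V] [Module k V]

/-- Operators `e` and `f` acting along a string of subspaces `P t`, `t ∈ ℤ`, as the standard
generators of `sl₂` act on the weight spaces of weights `c + 2 * t`. -/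
structure IsSlTwoString (e f : Module.End k V) (P : ℤ → Submodule k V) (c : ℤ) : Prop where
  raise : ∀ t, ∀ x ∈ P t, e x ∈ P (t + 1)
  lower : ∀ t, ∀ x ∈ P t, f x ∈ P (t - 1)
  comm : ∀ t, ∀ x ∈ P t, e (f x) = f (e x) + ((c + 2 * t : ℤ) : k) • x

namespace IsSlTwoString

variable {e f : Module.End k V} {P : ℤ → Submodule k V} {c : ℤ}

theorem symm (h : IsSlTwoString e f P c) : IsSlTwoString f e (fun t => P (-t)) (-c) where
  raise t x hx := by rw [neg_add']; exact h.lower _ x hx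
  lower t x hx := by rw [neg_sub, sub_eq_neg_add]; exact h.raise _ x hx
  comm t x hx := by
    rw [h.comm _ x hx, add_assoc, ← add_smul]
    push_cast
    module

theorem pow_lower (h : IsSlTwoString e f P c) {t : ℤ} {x : V} (hx : x ∈ P t) (s : ℕ) :
    (f ^ s) x ∈ P (t - s) := by
  induction s with
  | zero => simpa using hx
  | succ s ih =>
    rw [pow_succ', Nat.cast_succ, ← sub_sub]
    exact h.lower _ _ ih

theorem comm_pow (h : IsSlTwoString e f P c) {t : ℤ} {x : V} (hx : x ∈ P t) (s : ℕ) :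
    e ((f ^ (s + 1)) x) =
      (f ^ (s + 1)) (e x) + ((s + 1 : k) * ((c + 2 * t : ℤ) - s)) • (f ^ s) x := by
  induction s with
  | zero => simp [h.comm t x hx]
  | succ s ih =>
    rw [pow_succ' f (s + 1), Module.End.mul_apply, h.comm _ _ (h.pow_lower hx (s + 1)), ih,
      map_add, map_smul, ← Module.End.mul_apply f, ← Module.End.mul_apply f, ← pow_succ',
      ← pow_succ']
    push_cast
    module

theorem rank_le [CharZero k] (h : IsSlTwoString e f P c) {m : ℕ} (hm : c = m)
    (he : ∀ x ∈ P 0, ∃ N, (e ^ N) x = 0) : Module.rank k (P 0) ≤ Module.rank k (P (-m)) := by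
  have hmem : ∀ x ∈ P 0, (f ^ m) x ∈ P (-m) := fun x hx => by
    simpa using h.pow_lower hx m
  refine LinearMap.rank_le_of_injective ((f ^ m).restrict hmem) ?_
  rw [← LinearMap.ker_eq_bot, LinearMap.ker_eq_bot']
  rintro ⟨x, hx⟩ hxm
  obtain ⟨N, hN⟩ := he x hx
  refine Subtype.ext (eq_zero_of_pow_apply_eq_zero h.raise (fun t y hy s => ?_) hx
    (by simpa using hm) hN (congrArg Subtype.val hxm))
  refine ⟨1, _, one_ne_zero, fun hs => ?_, by rw [one_smul]; exact h.comm_pow hy s⟩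
  refine mul_ne_zero (by exact_mod_cast s.succ_ne_zero) (sub_ne_zero.2 ?_)
  exact_mod_cast hs.ne'

end IsSlTwoString

end SlTwoStrings

/-! ### The positive part of a Kac–Moody algebra -/

section SquareZeroExtension

variable (k L M : Type*) [CommRing k] [LieRing L] [LieAlgebra k L] [AddCommGroup M] [Module k M]
  [LieRingModule L M] [LieModule k L M]

/-- The square-zero extension of a Lie algebra by a Lie module, as the extension defined by the
cocycle `0`; its sections are the derivations of `L` into `M`. -/
abbrev SqZeroExt : Type _ :=
  LieAlgebra.ofTwoCocycle (0 : LieModule.Cohomology.twoCocycle k L M)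

namespace SqZeroExt

variable {k L M}

theorem lie_mk (x y : L) (a b : M) :
    ⁅(⟨(x, a)⟩ : SqZeroExt k L M), (⟨(y, b)⟩ : SqZeroExt k L M)⁆ =
      ⟨(⁅x, y⁆, ⁅x, b⁆ - ⁅y, a⁆)⟩ :=
  congrArg (fun c => (⟨(_, c)⟩ : SqZeroExt k L M)) (by simp [LieAlgebra.ofProd])

theorem ad_pow_mk (x z : L) (a : M) {y : ℕ → M}
    (hy : ∀ m, y (m + 1) = ⁅x, y m⁆ - ⁅(LieAlgebra.ad k L x ^ m) z, a⁆) (m : ℕ) :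
    (LieAlgebra.ad k (SqZeroExt k L M) ⟨(x, a)⟩ ^ m) ⟨(z, y 0)⟩ =
      ⟨((LieAlgebra.ad k L x ^ m) z, y m)⟩ := by
  induction m with
  | zero => rfl
  | succ m ih =>
    rw [pow_succ', Module.End.mul_apply, ih, LieAlgebra.ad_apply, lie_mk, pow_succ', hy,
      Module.End.mul_apply, LieAlgebra.ad_apply]

variable (k L M) in
/-- The projection of the square-zero extension onto `L`. -/
def fst : SqZeroExt k L M →ₗ⁅k⁆ L where
  toFun x := x.carrier.1
  map_add' _ _ := rfl
  map_smul' _ _ := rfl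
  map_lie' := rfl

/-- The derivation given by a section of the square-zero extension. -/
def derivationOfSection (φ : L →ₗ⁅k⁆ SqZeroExt k L M) (hφ : (fst k L M).comp φ = LieHom.id) :
    LieDerivation k L M where
  toFun x := (φ x).carrier.2
  map_add' x y := by rw [map_add]; rfl
  map_smul' c x := by rw [map_smul]; rfl
  leibniz' x y := by
    have hx : (φ x).carrier.1 = x := LieHom.congr_fun hφ x
    have hy : (φ y).carrier.1 = y := LieHom.congr_fun hφ y
    change (φ ⁅x, y⁆).carrier.2 = ⁅x, (φ y).carrier.2⁆ - ⁅y, (φ x).carrier.2⁆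
    rw [LieHom.map_lie, lie_mk, hx, hy]

end SqZeroExt

end SquareZeroExtension

section SerreAlgebra

theorem map_ad_pow_apply {k L L' : Type*} [CommRing k] [LieRing L] [LieAlgebra k L] [LieRing L']
    [LieAlgebra k L'] (φ : L →ₗ⁅k⁆ L') (x y : L) (m : ℕ) :
    φ ((LieAlgebra.ad k L x ^ m) y) = (LieAlgebra.ad k L' (φ x) ^ m) (φ y) := by
  induction m with
  | zero => simp
  | succ m ih => simp [pow_succ', ih]

variable (k : Type*) [CommRing k] {n : ℕ} (A : Matrix (Fin n) (Fin n) ℤ)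

/-- The ideal of the free Lie algebra generated by the Serre elements
`(ad eᵢ) ^ (1 - aᵢⱼ) eⱼ`, `i ≠ j`. -/
def serreIdeal : LieIdeal k (FreeLieAlgebra k (Fin n)) :=
  LieSubmodule.lieSpan k (FreeLieAlgebra k (Fin n))
    {x | ∃ i j, i ≠ j ∧ x = ((LieAlgebra.ad k (FreeLieAlgebra k (Fin n)) (FreeLieAlgebra.of k i))
      ^ (1 - A i j).toNat) (FreeLieAlgebra.of k j)}

/-- The positive part `g⁺` of the Kac–Moody algebra of a symmetrizable generalized Cartan matrix,
in its presentation by the Serre relations. -/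
abbrev SerreAlgebra : Type _ := FreeLieAlgebra k (Fin n) ⧸ serreIdeal k A

namespace SerreAlgebra

/-- The canonical projection of the free Lie algebra onto `g⁺`. -/
def proj : FreeLieAlgebra k (Fin n) →ₗ⁅k⁆ SerreAlgebra k A :=
  { (LieSubmodule.Quotient.mk' (serreIdeal k A)).toLinearMap with
    map_lie' := rfl }

/-- The generators `eᵢ` of `g⁺`. -/
def gen (i : Fin n) : SerreAlgebra k A := proj k A (FreeLieAlgebra.of k i)

variable {k A}

theorem proj_surjective : Function.Surjective (proj k A) :=
  LieSubmodule.Quotient.surjective_mk' (serreIdeal k A)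

theorem proj_eq_zero {x : FreeLieAlgebra k (Fin n)} : proj k A x = 0 ↔ x ∈ serreIdeal k A :=
  LieSubmodule.Quotient.mk_eq_zero (serreIdeal k A)

theorem ad_gen_pow_gen {i j : Fin n} (hij : i ≠ j) :
    (LieAlgebra.ad k (SerreAlgebra k A) (gen k A i) ^ (1 - A i j).toNat) (gen k A j) = 0 := by
  rw [gen, gen, ← map_ad_pow_apply, proj_eq_zero]
  exact LieSubmodule.subset_lieSpan ⟨i, j, hij, rfl⟩

variable {L : Type*} [LieRing L] [LieAlgebra k L]

theorem hom_ext {φ ψ : SerreAlgebra k A →ₗ⁅k⁆ L} (h : ∀ i, φ (gen k A i) = ψ (gen k A i)) :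
    φ = ψ := by
  have hcomp : φ.comp (proj k A) = ψ.comp (proj k A) := FreeLieAlgebra.hom_ext h
  ext x
  obtain ⟨y, rfl⟩ := proj_surjective x
  exact LieHom.congr_fun hcomp y

theorem exists_lift (f : Fin n → L)
    (hf : ∀ i j, i ≠ j → (LieAlgebra.ad k L (f i) ^ (1 - A i j).toNat) (f j) = 0) :
    ∃ φ : SerreAlgebra k A →ₗ⁅k⁆ L, ∀ i, φ (gen k A i) = f i := by
  have hle : serreIdeal k A ≤ (FreeLieAlgebra.lift k f).ker := by
    rw [serreIdeal, LieSubmodule.lieSpan_le]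
    rintro x ⟨i, j, hij, rfl⟩
    rw [SetLike.mem_coe, LieHom.mem_ker, map_ad_pow_apply, FreeLieAlgebra.lift_of_apply,
      FreeLieAlgebra.lift_of_apply, hf i j hij]
  refine ⟨{ (serreIdeal k A).toSubmodule.liftQ (FreeLieAlgebra.lift k f).toLinearMap hle with
    map_lie' := ?_ }, FreeLieAlgebra.lift_of_apply f⟩
  intro x y
  obtain ⟨x, rfl⟩ := proj_surjective x
  obtain ⟨y, rfl⟩ := proj_surjective y
  exact (FreeLieAlgebra.lift k f).map_lie x y

theorem lieSpan_range_gen :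
    LieSubalgebra.lieSpan k (SerreAlgebra k A) (Set.range (gen k A)) = ⊤ := by
  set S := LieSubalgebra.lieSpan k (SerreAlgebra k A) (Set.range (gen k A))
  let φ : FreeLieAlgebra k (Fin n) →ₗ⁅k⁆ S :=
    FreeLieAlgebra.lift k fun i => ⟨gen k A i, LieSubalgebra.subset_lieSpan ⟨i, rfl⟩⟩
  have hφ : S.incl.comp φ = proj k A := FreeLieAlgebra.hom_ext fun i => by
    rw [LieHom.comp_apply, FreeLieAlgebra.lift_of_apply]
    rfl
  refine eq_top_iff.2 fun x _ => ?_
  obtain ⟨y, rfl⟩ := proj_surjective x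
  rw [← hφ]
  exact (φ y).2

theorem exists_ad_gen_pow_eq_zero (i : Fin n) (x : SerreAlgebra k A) :
    ∃ N : ℕ, (LieAlgebra.ad k (SerreAlgebra k A) (gen k A i) ^ N) x = 0 := by
  have hle : LieSubalgebra.lieSpan k (SerreAlgebra k A) (Set.range (gen k A)) ≤
      LieSubalgebra.engel k (gen k A i) := by
    rw [LieSubalgebra.lieSpan_le]
    rintro _ ⟨j, rfl⟩
    rw [SetLike.mem_coe, LieSubalgebra.mem_engel_iff]
    by_cases hij : i = j
    · exact ⟨1, by simp [hij]⟩
    · exact ⟨_, ad_gen_pow_gen hij⟩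
  rw [lieSpan_range_gen] at hle
  exact (LieSubalgebra.mem_engel_iff k _ x).1 (hle trivial)

variable {M : Type*} [AddCommGroup M] [Module k M] [LieRingModule (SerreAlgebra k A) M]
  [LieModule k (SerreAlgebra k A) M]

variable (k A) in
/-- The condition on a family `f i` of elements of a `g⁺`-module for a derivation `eᵢ ↦ f i` to
respect the `(i, j)`-th Serre relation; `y m` is the value of the derivation on `(ad eᵢ) ^ m eⱼ`. -/
def IsSerreCompatible (f : Fin n → M) (i j : Fin n) : Prop :=
  ∃ y : ℕ → M, y 0 = f j ∧
    (∀ m, y (m + 1) = ⁅gen k A i, y m⁆ -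
      ⁅(LieAlgebra.ad k (SerreAlgebra k A) (gen k A i) ^ m) (gen k A j), f i⁆) ∧
    y (1 - A i j).toNat = 0

theorem exists_derivation {f : Fin n → M} (hf : ∀ i j, i ≠ j → IsSerreCompatible k A f i j) :
    ∃ D : LieDerivation k (SerreAlgebra k A) M, ∀ i, D (gen k A i) = f i := by
  obtain ⟨φ, hφ⟩ := exists_lift (A := A) (L := SqZeroExt k (SerreAlgebra k A) M)
    (fun i => ⟨(gen k A i, f i)⟩) fun i j hij => by
      obtain ⟨y, hy0, hy, hyN⟩ := hf i j hij
      rw [← hy0, SqZeroExt.ad_pow_mk _ _ _ hy, hyN, ad_gen_pow_gen hij]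
      rfl
  refine ⟨SqZeroExt.derivationOfSection φ (hom_ext fun i => ?_), fun i => ?_⟩
  · rw [LieHom.comp_apply, hφ]
    rfl
  · exact congrArg (fun x => x.carrier.2) (hφ i)

end SerreAlgebra

end SerreAlgebra

section WeightGrading

attribute [local instance] LieRing.ofAssociativeRing

section WeightSpaces

variable {k L : Type*} [CommRing k] [LieRing L] [LieAlgebra k L] {n : ℕ}

/-- `IsBracketMonomial e x β`: `x` is an iterated bracket of the `e i`, and `β` counts the
occurrences of each `e i` in it. -/
inductive IsBracketMonomial (e : Fin n → L) : L → (Fin n → ℤ) → Prop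
  | gen (i : Fin n) : IsBracketMonomial e (e i) (ee i)
  | lie {x y : L} {β γ : Fin n → ℤ} :
      IsBracketMonomial e x β → IsBracketMonomial e y γ → IsBracketMonomial e ⁅x, y⁆ (β + γ)

variable (k) in
/-- The weight space of weight `β` of a Lie algebra generated by elements `e i` of weight `ee i`. -/
def weightSpace (e : Fin n → L) (β : Fin n → ℤ) : Submodule k L :=
  Submodule.span k {x | IsBracketMonomial e x β}

variable {e : Fin n → L} {β γ : Fin n → ℤ} {x y : L}

theorem ee_pos (i : Fin n) : 0 < ee i := Pi.single_pos.2 one_pos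

namespace IsBracketMonomial

theorem pos (h : IsBracketMonomial e x β) : 0 < β := by
  induction h with
  | gen i => exact ee_pos i
  | lie _ _ hβ hγ => exact add_pos hβ hγ

theorem mem_weightSpace (h : IsBracketMonomial e x β) : x ∈ weightSpace k e β :=
  Submodule.subset_span h

theorem eq_of_support (h : IsBracketMonomial e x β) {i : Fin n} (hβ : ∀ l, l ≠ i → β l = 0) :
    x = 0 ∨ x = e i ∧ β = ee i := by
  induction h with
  | gen j =>
    obtain rfl | hj := eq_or_ne j i
    · exact Or.inr ⟨rfl, rfl⟩
    · simpa [ee_apply] using hβ j hj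
  | @lie x y β γ hx hy ihx ihy =>
    have hβγ : ∀ l, l ≠ i → β l = 0 ∧ γ l = 0 := fun l hl =>
      (add_eq_zero_iff_of_nonneg (hx.pos.le l) (hy.pos.le l)).1 (hβ l hl)
    left
    obtain rfl | ⟨rfl, -⟩ := ihx fun l hl => (hβγ l hl).1
    · exact zero_lie _
    obtain rfl | ⟨rfl, -⟩ := ihy fun l hl => (hβγ l hl).2
    · exact lie_zero _
    · exact lie_self _

end IsBracketMonomial

theorem gen_mem_weightSpace (i : Fin n) : e i ∈ weightSpace k e (ee i) :=
  (IsBracketMonomial.gen i).mem_weightSpace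

theorem lie_mem_weightSpace (hx : x ∈ weightSpace k e β) (hy : y ∈ weightSpace k e γ) :
    ⁅x, y⁆ ∈ weightSpace k e (β + γ) :=
  LinearMap.BilinMap.apply_apply_mem_of_mem_span _ _ _ (LieAlgebra.ad k L).toLinearMap
    (fun _ hx _ hy => (hx.lie hy).mem_weightSpace) _ _ hx hy

theorem ad_pow_mem_weightSpace (hx : x ∈ weightSpace k e β) (hy : y ∈ weightSpace k e γ) (m : ℕ) :
    (LieAlgebra.ad k L x ^ m) y ∈ weightSpace k e (m • β + γ) := by
  induction m with
  | zero => simpa using hy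
  | succ m ih =>
    rw [pow_succ', succ_nsmul', add_assoc]
    exact lie_mem_weightSpace hx ih

theorem exists_isBracketMonomial_of_weightSpace_ne_bot (h : weightSpace k e β ≠ ⊥) :
    ∃ x, x ≠ 0 ∧ IsBracketMonomial e x β := by
  by_contra! hx
  exact h (Submodule.span_eq_bot.2 fun x hxβ => by_contra fun h0 => hx x h0 hxβ)

theorem pos_of_weightSpace_ne_bot (h : weightSpace k e β ≠ ⊥) : 0 < β :=
  let ⟨_, _, hx⟩ := exists_isBracketMonomial_of_weightSpace_ne_bot h
  hx.pos

theorem eq_ee_of_weightSpace_ne_bot (h : weightSpace k e β ≠ ⊥) {i : Fin n}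
    (hβ : ∀ l, l ≠ i → β l = 0) : β = ee i := by
  obtain ⟨x, hx0, hx⟩ := exists_isBracketMonomial_of_weightSpace_ne_bot h
  exact ((hx.eq_of_support hβ).resolve_left hx0).2

theorem weightSpace_ee_le_span_singleton (i : Fin n) :
    weightSpace k e (ee i) ≤ Submodule.span k {e i} := by
  refine Submodule.span_le.2 fun x hx => ?_
  obtain rfl | ⟨rfl, -⟩ := IsBracketMonomial.eq_of_support hx (i := i) fun l hl => by
    simp [ee_apply, hl]
  · exact zero_mem _
  · exact Submodule.mem_span_singleton_self _

theorem lie_mem_iSup_weightSpace (hx : x ∈ ⨆ β, weightSpace k e β)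
    (hy : y ∈ ⨆ β, weightSpace k e β) : ⁅x, y⁆ ∈ ⨆ β, weightSpace k e β := by
  induction hx using Submodule.iSup_induction' with
  | mem β x hx =>
    induction hy using Submodule.iSup_induction' with
    | mem γ y hy => exact Submodule.mem_iSup_of_mem (β + γ) (lie_mem_weightSpace hx hy)
    | zero => simp
    | add y y' _ _ hy hy' => simpa only [lie_add] using add_mem hy hy'
  | zero => simp
  | add x x' _ _ hx hx' => simpa only [add_lie] using add_mem hx hx'

theorem iSup_weightSpace (h : LieSubalgebra.lieSpan k L (Set.range e) = ⊤) :
    ⨆ β, weightSpace k e β = ⊤ := by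
  let S : LieSubalgebra k L :=
    { (⨆ β, weightSpace k e β : Submodule k L) with
      lie_mem' := lie_mem_iSup_weightSpace }
  have hS : S = ⊤ := by
    rw [eq_top_iff, ← h, LieSubalgebra.lieSpan_le]
    rintro _ ⟨i, rfl⟩
    exact Submodule.mem_iSup_of_mem (ee i) (gen_mem_weightSpace i)
  exact congrArg LieSubalgebra.toSubmodule hS

end WeightSpaces

section AdjointExtension

variable {k L : Type*} [CommRing k] [LieRing L] [LieAlgebra k L]

/-- The Lie algebra homomorphism from the one-dimensional Lie algebra that hits `H`. -/
def smulDerivation (H : LieDerivation k L L) : k →ₗ⁅k⁆ LieDerivation k L L :=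
  { LinearMap.toSpanSingleton k _ H with
    map_lie' := by simp [LieRing.of_associative_ring_bracket, mul_comm] }

/-- The semidirect sum of `L` with a one-dimensional Lie algebra acting by the derivation `-H`,
regarded as an `L`-module. -/
abbrev AdjointExt (H : LieDerivation k L L) : Type _ :=
  LieAlgebra.SemiDirectSum L k (smulDerivation H)

namespace AdjointExt

variable {H : LieDerivation k L L}

instance : LieRingModule L (AdjointExt H) :=
  LieRingModule.compLieHom _ (LieAlgebra.SemiDirectSum.inl (smulDerivation H))

instance : LieModule k L (AdjointExt H) :=
  LieModule.compLieHom _ (LieAlgebra.SemiDirectSum.inl (smulDerivation H))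

theorem lie_def (x : L) (y : AdjointExt H) : ⁅x, y⁆ = ⟨⁅x, y.left⁆ - y.right • H x, 0⟩ := by
  change (⟨⁅x, y.left⁆ + ((0 : k) • H) y.left - (y.right • H) x, ⁅(0 : k), y.right⁆⟩ :
    AdjointExt H) = _
  simp

end AdjointExt

end AdjointExtension

namespace SerreAlgebra

section Lowering

variable {k : Type*} [CommRing k] {n : ℕ} {A : Matrix (Fin n) (Fin n) ℤ}

variable (k A) in
theorem exists_weight_derivation (p : Fin n) :
    ∃ H : LieDerivation k (SerreAlgebra k A) (SerreAlgebra k A),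
      ∀ β, ∀ x ∈ weightSpace k (gen k A) β, H x = coroot A p β • x := by
  obtain ⟨H, hH⟩ := exists_derivation (k := k) (A := A)
      (f := fun i => A p i • gen k A i) fun i j hij => by
    refine ⟨fun m => (m * A p i + A p j) •
      (LieAlgebra.ad k (SerreAlgebra k A) (gen k A i) ^ m) (gen k A j), by simp, fun m => ?_, ?_⟩
    · beta_reduce
      rw [lie_zsmul, lie_zsmul, pow_succ', Module.End.mul_apply, LieAlgebra.ad_apply,
        ← lie_skew (gen k A i)]
      push_cast
      module
    · simp only [ad_gen_pow_gen hij, smul_zero]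
  refine ⟨H, fun β x hx => ?_⟩
  induction hx using Submodule.span_induction with
  | mem x hx =>
    induction hx with
    | gen i => rw [hH, coroot_ee]
    | lie _ _ hx hy =>
      rw [LieDerivation.apply_lie_eq_sub, hx, hy, map_add, lie_zsmul, lie_zsmul, ← lie_skew]
      module
  | zero => rw [map_zero, smul_zero]
  | add x y _ _ hx hy => rw [map_add, hx, hy, smul_add]
  | smul c x _ hx => rw [map_smul, hx, smul_comm]

variable {p : Fin n} {H : LieDerivation k (SerreAlgebra k A) (SerreAlgebra k A)}

variable (k A H p) in
/-- The values on the generators of the derivation `x ↦ ⁅x, fₚ⁆` of `g⁺` into `g⁺ ⊕ k hₚ`. -/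
def loweringValue (i : Fin n) : AdjointExt H := ⟨0, if i = p then -1 else 0⟩

theorem weight_derivation_ad_gen_pow_gen
    (hH : ∀ β, ∀ x ∈ weightSpace k (gen k A) β, H x = coroot A p β • x) (i j : Fin n) (m : ℕ) :
    H ((LieAlgebra.ad k (SerreAlgebra k A) (gen k A i) ^ m) (gen k A j)) =
      (m * A p i + A p j) • (LieAlgebra.ad k (SerreAlgebra k A) (gen k A i) ^ m) (gen k A j) := by
  rw [hH _ _ (ad_pow_mem_weightSpace (gen_mem_weightSpace i) (gen_mem_weightSpace j) m), map_add,
    map_nsmul, coroot_ee, coroot_ee, nsmul_eq_mul]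

theorem isSerreCompatible_loweringValue_self (hA : IsGCM A)
    (hH : ∀ β, ∀ x ∈ weightSpace k (gen k A) β, H x = coroot A p β • x) {j : Fin n} (hpj : p ≠ j) :
    IsSerreCompatible k A (loweringValue k A p H) p j := by
  obtain ⟨N, hN⟩ := Int.exists_eq_neg_ofNat (hA.nonpos p j hpj)
  have hHj : H (gen k A j) = A p j • gen k A j := by
    rw [hH _ _ (gen_mem_weightSpace j), coroot_ee]
  have hH' := weight_derivation_ad_gen_pow_gen hH p j
  refine ⟨Nat.rec 0 fun m _ => ⟨(-((m + 1) * (A p j + m)) : ℤ) •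
    (LieAlgebra.ad k (SerreAlgebra k A) (gen k A p) ^ m) (gen k A j), 0⟩, ?_, ?_, ?_⟩
  · simp [loweringValue, hpj.symm]
  · rintro (_ | m)
    · ext <;> simp [AdjointExt.lie_def, loweringValue, hHj]
    · ext
      · simp only [Nat.cast_add, Nat.cast_one, neg_smul, AdjointExt.lie_def, lie_neg, lie_smul,
          zero_smul, sub_zero, loweringValue, ↓reduceIte, lie_zero, hH', hA.diag, one_smul,
          sub_neg_eq_add, zero_add, LieAlgebra.SemiDirectSum.sub_eq_mk, sub_self]
        simp only [pow_succ', Module.End.mul_apply, LieAlgebra.ad_apply]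
        module
      · simp [AdjointExt.lie_def, loweringValue]
  · rw [show (1 - A p j).toNat = N + 1 by omega]
    ext <;> simp [hN]

theorem isSerreCompatible_loweringValue_of_ne (hA : IsGCM A)
    (hH : ∀ β, ∀ x ∈ weightSpace k (gen k A) β, H x = coroot A p β • x) {i : Fin n} (hip : i ≠ p) :
    IsSerreCompatible k A (loweringValue k A p H) i p := by
  have hHi : H (gen k A i) = A p i • gen k A i := by
    rw [hH _ _ (gen_mem_weightSpace i), coroot_ee]
  refine ⟨Nat.rec ⟨0, -1⟩ fun m _ => Nat.rec ⟨A p i • gen k A i, 0⟩ (fun _ _ => 0) m,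
    by simp [loweringValue], ?_, ?_⟩
  · rintro (_ | _ | m) <;> ext <;> simp [AdjointExt.lie_def, loweringValue, hip, hHi]
  · obtain ⟨N, hN⟩ := Int.exists_eq_neg_ofNat (hA.nonpos i p hip)
    rw [show (1 - A i p).toNat = N + 1 by omega]
    obtain _ | N := N
    · have : A p i = 0 := (hA.zero_iff i p).1 (by simpa using hN)
      simp [this]
    · rfl

theorem isSerreCompatible_loweringValue (hA : IsGCM A)
    (hH : ∀ β, ∀ x ∈ weightSpace k (gen k A) β, H x = coroot A p β • x) {i j : Fin n}
    (hij : i ≠ j) : IsSerreCompatible k A (loweringValue k A p H) i j := by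
  obtain rfl | hip := eq_or_ne i p
  · exact isSerreCompatible_loweringValue_self hA hH hij
  obtain rfl | hjp := eq_or_ne j p
  · exact isSerreCompatible_loweringValue_of_ne hA hH hij
  · exact ⟨0, by simp [loweringValue, hjp], fun m => by
      ext <;> simp [AdjointExt.lie_def, loweringValue, hip], rfl⟩

variable {D : LieDerivation k (SerreAlgebra k A) (AdjointExt H)}

theorem lowering_right_eq_zero (hD : ∀ i, D (gen k A i) = loweringValue k A p H i)
    {x : SerreAlgebra k A} {β : Fin n → ℤ} (hx : IsBracketMonomial (gen k A) x β)
    (hβ : β ≠ ee p) : (D x).right = 0 := by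
  cases hx with
  | gen i =>
    have hi : i ≠ p := fun h => hβ (congrArg ee h)
    simp [hD, loweringValue, hi]
  | lie _ _ => simp [LieDerivation.apply_lie_eq_sub, AdjointExt.lie_def]

theorem lowering_lie_left (x y : SerreAlgebra k A) :
    (D ⁅x, y⁆).left =
      ⁅x, (D y).left⁆ - (D y).right • H x - (⁅y, (D x).left⁆ - (D x).right • H y) := by
  rw [LieDerivation.apply_lie_eq_sub, AdjointExt.lie_def, AdjointExt.lie_def]
  rfl

theorem lowering_left_mem_weightSpace
    (hH : ∀ β, ∀ x ∈ weightSpace k (gen k A) β, H x = coroot A p β • x)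
    (hD : ∀ i, D (gen k A i) = loweringValue k A p H i)
    {x : SerreAlgebra k A} {β : Fin n → ℤ} (hx : IsBracketMonomial (gen k A) x β) :
    (D x).left ∈ weightSpace k (gen k A) (β - ee p) := by
  induction hx with
  | gen i =>
    rw [hD]
    exact zero_mem _
  | @lie x y β γ hx hy ihx ihy =>
    have hmem : ∀ {x y : SerreAlgebra k A} {β γ : Fin n → ℤ},
        IsBracketMonomial (gen k A) x β → IsBracketMonomial (gen k A) y γ →
        (D y).left ∈ weightSpace k (gen k A) (γ - ee p) →
        ⁅x, (D y).left⁆ - (D y).right • H x ∈ weightSpace k (gen k A) (β + γ - ee p) := by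
      intro x y β γ hx hy ihy
      refine sub_mem ?_ ?_
      · rw [add_sub_assoc]
        exact lie_mem_weightSpace hx.mem_weightSpace ihy
      · obtain rfl | hγ := eq_or_ne γ (ee p)
        · rw [add_sub_cancel_right, hH β x hx.mem_weightSpace]
          exact Submodule.smul_mem _ _ (zsmul_mem hx.mem_weightSpace _)
        · rw [lowering_right_eq_zero hD hy hγ, zero_smul]
          exact zero_mem _
    rw [lowering_lie_left]
    refine sub_mem (hmem hx hy ihy) ?_
    rw [add_comm β]
    exact hmem hy hx ihx

theorem lowering_comm (hH : ∀ β, ∀ x ∈ weightSpace k (gen k A) β, H x = coroot A p β • x)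
    (hD : ∀ i, D (gen k A i) = loweringValue k A p H i)
    {x : SerreAlgebra k A} {β : Fin n → ℤ} (hx : IsBracketMonomial (gen k A) x β)
    (hβ : β ≠ ee p) :
    ⁅gen k A p, (D x).left⁆ = (D ⁅gen k A p, x⁆).left + coroot A p β • x := by
  rw [lowering_lie_left, lowering_right_eq_zero hD hx hβ, hD, hH β x hx.mem_weightSpace]
  simp [loweringValue]

variable (k) in
theorem gen_ne_zero [Nontrivial k] (hA : IsGCM A) (p : Fin n) : gen k A p ≠ 0 := fun h => by
  obtain ⟨H, hH⟩ := exists_weight_derivation k A p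
  obtain ⟨D, hD⟩ := exists_derivation fun i j hij =>
    isSerreCompatible_loweringValue (H := H) hA hH (i := i) (j := j) hij
  simpa [h, loweringValue] using congrArg LieAlgebra.SemiDirectSum.right (hD p)

variable (k) in
theorem exists_lowering (hA : IsGCM A) (p : Fin n) :
    ∃ f : Module.End k (SerreAlgebra k A),
      (∀ β, ∀ x ∈ weightSpace k (gen k A) β, f x ∈ weightSpace k (gen k A) (β - ee p)) ∧
      ∀ β ≠ ee p, ∀ x ∈ weightSpace k (gen k A) β,
        ⁅gen k A p, f x⁆ = f ⁅gen k A p, x⁆ + coroot A p β • x := by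
  obtain ⟨H, hH⟩ := exists_weight_derivation k A p
  obtain ⟨D, hD⟩ := exists_derivation fun i j hij =>
    isSerreCompatible_loweringValue (H := H) hA hH (i := i) (j := j) hij
  let f : Module.End k (SerreAlgebra k A) :=
    LieAlgebra.SemiDirectSum.projl (smulDerivation H) ∘ₗ D.toLinearMap
  refine ⟨f, fun β x hx => ?_, fun β hβ x hx => ?_⟩
  · have hle : weightSpace k (gen k A) β ≤ (weightSpace k (gen k A) (β - ee p)).comap f :=
      Submodule.span_le.2 fun x hx => lowering_left_mem_weightSpace hH hD hx
    exact hle hx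
  · induction hx using Submodule.span_induction with
    | mem x hx => exact lowering_comm hH hD hx hβ
    | zero => rw [map_zero, lie_zero, map_zero, smul_zero, add_zero]
    | add x y _ _ hx hy =>
      rw [map_add, lie_add, lie_add, map_add, hx, hy, smul_add]
      abel
    | smul c x _ hx => rw [map_smul, lie_smul, lie_smul, map_smul, hx, smul_add, smul_comm c]

end Lowering

variable {k : Type*} [Field k] {n : ℕ} {A : Matrix (Fin n) (Fin n) ℤ}

variable (k) in
theorem exists_isSlTwoString (hA : IsGCM A) {p : Fin n} {β : Fin n → ℤ}
    (hβ : ∀ t : ℤ, β + t • ee p ≠ ee p) :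
    ∃ f, IsSlTwoString (LieAlgebra.ad k (SerreAlgebra k A) (gen k A p)) f
      (fun t => weightSpace k (gen k A) (β + t • ee p)) (coroot A p β) := by
  obtain ⟨f, hf, hcomm⟩ := exists_lowering k hA p
  refine ⟨f, fun t x hx => ?_, fun t x hx => ?_, fun t x hx => ?_⟩
  · rw [show β + (t + 1) • ee p = ee p + (β + t • ee p) by module]
    exact lie_mem_weightSpace (gen_mem_weightSpace p) hx
  · rw [show β + (t - 1) • ee p = β + t • ee p - ee p by module]
    exact hf _ x hx
  · rw [LieAlgebra.ad_apply, hcomm _ (hβ t) x hx, map_add, map_smul, coroot_ee, hA.diag,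
      Int.cast_smul_eq_zsmul, smul_eq_mul, mul_comm t, LieAlgebra.ad_apply]

theorem rank_weightSpace_le_simpleReflection [CharZero k] (hA : IsGCM A) {p : Fin n}
    {β : Fin n → ℤ} (hβ : β ≠ ee p) :
    Module.rank k (weightSpace k (gen k A) β) ≤
      Module.rank k (weightSpace k (gen k A) (simpleReflection A p β)) := by
  by_cases hbot : weightSpace k (gen k A) β = ⊥
  · rw [hbot, rank_bot]
    exact zero_le
  have hstring : ∀ t : ℤ, β + t • ee p ≠ ee p := fun t ht =>
    hβ (eq_ee_of_weightSpace_ne_bot hbot fun l hl => by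
      simpa [ee_apply, hl] using congrFun ht l)
  obtain ⟨f, hstr⟩ := exists_isSlTwoString k hA hstring
  set P : ℤ → Submodule k (SerreAlgebra k A) := fun t => weightSpace k (gen k A) (β + t • ee p)
  have hP : weightSpace k (gen k A) β = P 0 := by simp only [P, zero_smul, add_zero]
  have hrefl : weightSpace k (gen k A) (simpleReflection A p β) = P (-coroot A p β) := by
    rw [simpleReflection_apply, sub_eq_add_neg, ← neg_smul]
  rw [hP, hrefl]
  obtain ⟨m, hm | hm⟩ := Int.eq_nat_or_neg (coroot A p β)
  · rw [hm]
    exact hstr.rank_le hm fun x _ => exists_ad_gen_pow_eq_zero p x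
  · have hnil : ∀ x ∈ P 0, (f ^ ((β p).toNat + 1)) x = 0 := by
      intro x hx
      by_contra hne
      have hpos := (pos_of_weightSpace_ne_bot ((Submodule.ne_bot_iff _).2
        ⟨_, hstr.pow_lower hx ((β p).toNat + 1), hne⟩)).le p
      simp only [Pi.zero_apply, Pi.add_apply, Pi.smul_apply, ee_apply, ↓reduceIte, smul_eq_mul,
        mul_one] at hpos
      omega
    rw [← neg_zero] at hnil
    rw [hm, ← neg_zero]
    exact hstr.symm.rank_le (by rw [hm, neg_neg]) fun x hx => ⟨_, hnil x hx⟩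

end SerreAlgebra

end WeightGrading

/-! ### Reduced words -/

section ReducedWords

variable {n : ℕ} {A : Matrix (Fin n) (Fin n) ℤ}

variable (A) in
/-- The words `[i₁, …, iₘ]` such that `s_{iᵣ} ⋯ s_{iⱼ₊₁} (ee iⱼ)` lies in `Δ` for all `j ≤ r`; if
`Δ` is the set of positive real roots, these are the reduced words of the Weyl group. -/
def IsReducedWord (Δ : Set (Fin n → ℤ)) (w : List (Fin n)) : Prop :=
  ∀ i y, (i :: y) <:+: w → wordReflectionInv A y (ee i) ∈ Δ

namespace IsReducedWord

variable {Δ Δ' : Set (Fin n → ℤ)} {v w : List (Fin n)}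

theorem mono (h : IsReducedWord A Δ w) (hΔ : Δ ⊆ Δ') : IsReducedWord A Δ' w :=
  fun i y hy => hΔ (h i y hy)

theorem of_infix (h : IsReducedWord A Δ w) (hv : v <:+: w) : IsReducedWord A Δ v :=
  fun i y hy => h i y (hy.trans hv)

theorem tail {i : Fin n} (h : IsReducedWord A Δ (i :: w)) : IsReducedWord A Δ w :=
  h.of_infix (List.suffix_cons i w).isInfix

end IsReducedWord

variable {k L : Type*} [Field k] [AddCommGroup L] [Module k L]

variable (A) in
/-- A grading of a vector space by the root lattice with the properties of the root space
decomposition of `g⁺`: each simple reflection preserves the dimensions of all the root spaces but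
that of its own simple root. -/
structure IsReflectionGrading (W : (Fin n → ℤ) → Submodule k L) : Prop where
  iSup_eq_top : ⨆ β, W β = ⊤
  pos : ∀ β, W β ≠ ⊥ → 0 < β
  ee_ne_bot : ∀ i, W (ee i) ≠ ⊥
  rank_ee_le_one : ∀ i, Module.rank k (W (ee i)) ≤ 1
  rank_le : ∀ i β, β ≠ ee i → Module.rank k (W β) ≤ Module.rank k (W (simpleReflection A i β))

namespace IsReflectionGrading

variable {W : (Fin n → ℤ) → Submodule k L} {w : List (Fin n)}

theorem simpleReflection_ne_bot (h : IsReflectionGrading A W) {i : Fin n} {β : Fin n → ℤ}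
    (hi : β ≠ ee i) (hβ : W β ≠ ⊥) : W (simpleReflection A i β) ≠ ⊥ := fun hbot => by
  have hrank := h.rank_le i β hi
  rw [hbot, rank_bot, nonpos_iff_eq_zero, Submodule.rank_eq_zero] at hrank
  exact hβ hrank

theorem exists_suffix_or_ne_bot (hdiag : ∀ i, A i i = 2) (h : IsReflectionGrading A W)
    (w : List (Fin n)) {β : Fin n → ℤ} (hβ : W β ≠ ⊥) :
    (∃ i y, (i :: y) <:+ w ∧ β = wordReflectionInv A y (ee i) ∧ Module.rank k (W β) ≤ 1) ∨
      W (wordReflection A w β) ≠ ⊥ := by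
  induction w using List.reverseRecOn generalizing β with
  | nil => exact Or.inr hβ
  | append_singleton w j ih =>
    obtain rfl | hj := eq_or_ne β (ee j)
    · exact Or.inl ⟨j, [], List.suffix_append w [j], rfl, h.rank_ee_le_one j⟩
    obtain ⟨i, y, hy, hβy, hrank⟩ | hne := ih (h.simpleReflection_ne_bot hj hβ)
    · refine Or.inl ⟨i, y ++ [j], List.suffix_concat_iff.2 (Or.inr ⟨i :: y, rfl, hy⟩), ?_,
        (h.rank_le j β hj).trans hrank⟩
      rw [wordReflectionInv_append, Module.End.mul_apply, ← hβy, wordReflectionInv_cons,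
        wordReflectionInv_nil, one_mul, simpleReflection_simpleReflection hdiag]
    · right
      rwa [wordReflection_append, wordReflection_cons, wordReflection_nil, mul_one]

theorem isReducedWord_concat (h : IsReflectionGrading A W)
    (hw : IsReducedWord A {β | W β ≠ ⊥} w) {j : Fin n}
    (hj : ∀ i y, (i :: y) <:+ w → wordReflectionInv A y (ee i) ≠ ee j) :
    IsReducedWord A {β | W β ≠ ⊥} (w ++ [j]) := by
  intro i y hy
  obtain hy | hy := List.infix_concat_iff.1 hy
  · obtain hnil | ⟨t, ht, htw⟩ := List.suffix_concat_iff.1 hy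
    · exact absurd hnil (List.cons_ne_nil i y)
    obtain _ | ⟨a, t⟩ := t
    · obtain ⟨-, rfl⟩ := List.cons.inj ht
      exact h.ee_ne_bot i
    · rw [List.cons_append, List.cons.injEq] at ht
      obtain ⟨rfl, rfl⟩ := ht
      rw [wordReflectionInv_append, wordReflectionInv_cons, wordReflectionInv_nil, one_mul]
      exact h.simpleReflection_ne_bot (hj i t htw) (hw i t htw.isInfix)
  · exact hw i y hy

theorem wordReflection_ne_bot (hdiag : ∀ i, A i i = 2) (h : IsReflectionGrading A W)
    {x y : List (Fin n)} {i : Fin n} (hw : IsReducedWord A {β | W β ≠ ⊥} (x ++ i :: y)) :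
    W (wordReflection A x (ee i)) ≠ ⊥ := by
  refine (h.exists_suffix_or_ne_bot hdiag x (h.ee_ne_bot i)).resolve_left ?_
  rintro ⟨j, t, ⟨s, rfl⟩, hi, -⟩
  have hneg : W (-ee i) ≠ ⊥ := by
    have := hw j (t ++ [i]) ⟨s, y, by simp⟩
    rwa [wordReflectionInv_append, Module.End.mul_apply, ← hi, wordReflectionInv_cons,
      wordReflectionInv_nil, one_mul, simpleReflection_ee_self hdiag] at this
  exact (h.pos _ hneg).not_gt (neg_neg_of_pos (ee_pos i))

theorem wordReflection_ee_nonpos (hdiag : ∀ i, A i i = 2) (h : IsReflectionGrading A W)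
    (hw : IsReducedWord A {β | W β ≠ ⊥} w) {i j : Fin n} {y : List (Fin n)} (hy : (i :: y) <:+ w)
    (hj : wordReflectionInv A y (ee i) = ee j) : wordReflection A w (ee j) ≤ 0 := by
  obtain ⟨x, rfl⟩ := hy
  have heq : wordReflection A (x ++ i :: y) (ee j) = -wordReflection A x (ee i) := by
    rw [← hj, wordReflection_append, wordReflection_cons, Module.End.mul_apply,
      Module.End.mul_apply, ← Module.End.mul_apply (wordReflection A y),
      wordReflection_mul_inv hdiag, Module.End.one_apply, simpleReflection_ee_self hdiag, map_neg]
  rw [heq]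
  exact neg_nonpos.2 (h.pos _ (h.wordReflection_ne_bot hdiag hw)).le

theorem rank_le_length (h : IsReflectionGrading A W)
    (hall : ∀ β, W β ≠ ⊥ → ∃ i y, (i :: y) <:+ w ∧ β = wordReflectionInv A y (ee i) ∧
      Module.rank k (W β) ≤ 1) : Module.rank k L ≤ w.length := by
  have hline : ∀ β, ∃ v : L, Module.rank k (W β) ≤ 1 → W β ≤ Submodule.span k {v} := fun β => by
    by_cases hβ : Module.rank k (W β) ≤ 1
    · obtain ⟨v, hv⟩ := (rank_submodule_le_one_iff' _).1 hβ
      exact ⟨v, fun _ => hv⟩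
    · exact ⟨0, fun hβ' => absurd hβ' hβ⟩
  choose v hv using hline
  let g : Fin w.length → L := fun p => v (wordReflectionInv A (w.drop (p + 1)) (ee (w.get p)))
  have hspan : Submodule.span k (Set.range g) = ⊤ := by
    rw [eq_top_iff, ← h.iSup_eq_top, iSup_le_iff]
    intro β
    by_cases hβ : W β = ⊥
    · rw [hβ]
      exact bot_le
    obtain ⟨i, y, ⟨x, rfl⟩, hβy, hrank⟩ := hall β hβ
    refine (hv β hrank).trans (Submodule.span_mono (Set.singleton_subset_iff.2 ?_))
    exact ⟨⟨x.length, by simp⟩, by simp [g, hβy]⟩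
  rw [← rank_top, ← hspan]
  exact (rank_span_le _).trans (by simpa using Cardinal.mk_range_le_lift (f := g))

theorem exists_isReducedWord (hdiag : ∀ i, A i i = 2) (h : IsReflectionGrading A W) (N : ℕ) :
    ∃ w, IsReducedWord A {β | W β ≠ ⊥} w ∧ (w.length = N ∨ Module.rank k L ≤ w.length) := by
  induction N with
  | zero => exact ⟨[], fun i y hy => by simp at hy, Or.inl rfl⟩
  | succ N ih =>
    obtain ⟨w, hw, hN | hN⟩ := ih
    swap
    · exact ⟨w, hw, Or.inr hN⟩
    by_cases hex : ∃ j, ∀ i y, (i :: y) <:+ w → wordReflectionInv A y (ee i) ≠ ee j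
    · obtain ⟨j, hj⟩ := hex
      exact ⟨w ++ [j], h.isReducedWord_concat hw hj, Or.inl (by simp [hN])⟩
    push Not at hex
    -- Every simple root, hence every positive vector, is sent to a negative one by `w`.
    have hneg : ∀ j, wordReflection A w (ee j) ≤ 0 := fun j =>
      let ⟨_, _, hy, hj⟩ := hex j
      h.wordReflection_ee_nonpos hdiag hw hy hj
    refine ⟨w, hw, Or.inr (h.rank_le_length fun β hβ => ?_)⟩
    refine (h.exists_suffix_or_ne_bot hdiag w hβ).resolve_right fun hne => ?_
    exact (h.pos _ hne).not_ge (wordReflection_nonpos hneg (h.pos β hβ).le)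

end IsReflectionGrading

namespace SerreAlgebra

theorem isReflectionGrading_weightSpace [CharZero k] (hA : IsGCM A) :
    IsReflectionGrading A (weightSpace k (gen k A)) where
  iSup_eq_top := iSup_weightSpace lieSpan_range_gen
  pos _ := pos_of_weightSpace_ne_bot
  ee_ne_bot i := (Submodule.ne_bot_iff _).2 ⟨_, gen_mem_weightSpace i, gen_ne_zero k hA i⟩
  rank_ee_le_one i := (Submodule.rank_mono (weightSpace_ee_le_span_singleton i)).trans
    (by simpa using rank_span_le (R := k) {gen k A i})
  rank_le _ _ := rank_weightSpace_le_simpleReflection hA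

end SerreAlgebra

end ReducedWords

/-! ### Quantum Serre elements -/

section SerreElements

variable {R B : Type*} [CommRing R] [Ring B] [Algebra R B]

/-- The iterated braided adjoint action `(ad_c X) ^ m Y`, where `p` is the self-braiding of `X` and
`c` is the braiding of `X` with `Y`. -/
def serreElt (p c : R) (X Y : B) : ℕ → B
  | 0 => Y
  | m + 1 => X * serreElt p c X Y m - (p ^ m * c) • (serreElt p c X Y m * X)

/-- The `q`-integer `1 + p + ⋯ + p ^ (m - 1)`. -/
def qInt (p : R) (m : ℕ) : R := ∑ t ∈ Finset.range m, p ^ t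

theorem qInt_succ (p : R) (m : ℕ) : qInt p (m + 1) = p * qInt p m + 1 := geom_sum_succ

theorem qInt_succ' (p : R) (m : ℕ) : qInt p (m + 1) = p ^ m + qInt p m := geom_sum_succ'

theorem mul_pow_of_mul_eq_smul {T X : B} {a : R} (hX : T * X = a • (X * T)) (m : ℕ) :
    T * X ^ m = a ^ m • (X ^ m * T) := by
  induction m with
  | zero => simp
  | succ m ih =>
    rw [pow_succ, ← mul_assoc, ih, smul_mul_assoc, mul_assoc, hX, mul_smul_comm, smul_smul,
      mul_assoc, pow_succ]

theorem mul_serreElt_of_mul_eq_smul (p c : R) {E X Y : B} {a b : R} (hX : E * X = a • (X * E))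
    (hY : E * Y = b • (Y * E)) (m : ℕ) :
    E * serreElt p c X Y m = (a ^ m * b) • (serreElt p c X Y m * E) := by
  induction m with
  | zero => simpa [serreElt] using hY
  | succ m ih =>
    simp only [serreElt]
    set S := serreElt p c X Y m
    rw [mul_sub, ← mul_assoc, hX, mul_smul_comm, ← mul_assoc E, ih, smul_mul_assoc, mul_assoc X,
      ih, smul_mul_assoc, mul_assoc S, hX]
    simp only [sub_mul, mul_smul_comm, smul_mul_assoc, mul_assoc]
    module

section Skew

variable {p : R} {E T X : B}

theorem mul_serreElt_step {c c' : R} {Y : B} (hX : E * X = p • (X * E) + 1 - T)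
    (hTX : T * X = p ^ 2 • (X * T)) (hTY : T * Y = (c * c') • (Y * T)) {m : ℕ} {g : R} {Z : B}
    (h : E * serreElt p c X Y m = (p ^ m * c') • (serreElt p c X Y m * E) + g • Z) :
    E * serreElt p c X Y (m + 1) = (p ^ (m + 1) * c') • (serreElt p c X Y (m + 1) * E) +
      (1 - p ^ (2 * m) * (c * c')) • serreElt p c X Y m +
      g • (p • (X * Z) - (p ^ m * c) • (Z * X)) := by
  have hT := mul_serreElt_of_mul_eq_smul p c hTX hTY m
  simp only [serreElt]
  set S := serreElt p c X Y m
  rw [mul_sub, ← mul_assoc, hX, mul_smul_comm, ← mul_assoc E, h]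
  simp only [sub_mul, add_mul, one_mul, smul_mul_assoc, mul_assoc]
  rw [h, hX, hT]
  simp only [mul_add, mul_sub, mul_one, mul_smul_comm]
  module

theorem mul_serreElt_self {c c' : R} {Y : B} (hX : E * X = p • (X * E) + 1 - T)
    (hY : E * Y = c' • (Y * E)) (hTX : T * X = p ^ 2 • (X * T)) (hTY : T * Y = (c * c') • (Y * T))
    (m : ℕ) : E * serreElt p c X Y (m + 1) = (p ^ (m + 1) * c') • (serreElt p c X Y (m + 1) * E) +
      (qInt p (m + 1) * (1 - p ^ m * (c * c'))) • serreElt p c X Y m := by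
  induction m with
  | zero =>
    have h : E * serreElt p c X Y 0 = (p ^ 0 * c') • (serreElt p c X Y 0 * E) + (0 : R) • 0 := by
      simpa [serreElt] using hY
    rw [mul_serreElt_step hX hTX hTY h]
    simp [qInt]
  | succ m ih =>
    have hcomm : p • (X * serreElt p c X Y m) - (p ^ (m + 1) * c) • (serreElt p c X Y m * X) =
        p • serreElt p c X Y (m + 1) := by
      simp only [serreElt]
      module
    have hq := (qInt_succ p (m + 1)).symm.trans (qInt_succ' p (m + 1))
    rw [mul_serreElt_step hX hTX hTY ih, hcomm, qInt_succ p (m + 1)]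
    match_scalars
    · ring
    · linear_combination (p ^ (m + 1) * (c * c')) * hq

theorem mul_serreElt_other {b c c' : R} {Y : B} (hX : E * X = c • (X * E))
    (hY : E * Y = b • (Y * E) + 1 - T) (hTX : T * X = c' • (X * T)) (m : ℕ) :
    E * serreElt p c X Y m = (c ^ m * b) • (serreElt p c X Y m * E) +
      (c ^ m * ∏ s ∈ Finset.range m, (1 - p ^ s)) • X ^ m -
      (c ^ m * ∏ s ∈ Finset.range m, (1 - p ^ s * c')) • (X ^ m * T) := by
  induction m with
  | zero => simp [serreElt, hY]
  | succ m ih =>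
    simp only [serreElt]
    set S := serreElt p c X Y m
    rw [mul_sub, ← mul_assoc, hX, mul_smul_comm, ← mul_assoc E, smul_mul_assoc, mul_assoc X, ih]
    simp only [sub_mul, add_mul, mul_add, mul_sub, smul_mul_assoc, mul_smul_comm, mul_assoc, hX,
      hTX, ← pow_succ, ← pow_succ']
    rw [← mul_assoc (X ^ m) X T, ← pow_succ, ← mul_assoc X (X ^ m), ← pow_succ',
      Finset.prod_range_succ, Finset.prod_range_succ]
    module

theorem mul_pow_succ_of_mul_eq (hX : E * X = p • (X * E) + 1 - T) (hTX : T * X = p ^ 2 • (X * T))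
    (s : ℕ) : E * X ^ (s + 1) = p ^ (s + 1) • (X ^ (s + 1) * E) +
      qInt p (s + 1) • X ^ s - (qInt p (s + 1) * p ^ s) • (X ^ s * T) := by
  induction s with
  | zero => simp [qInt, hX]
  | succ s ih =>
    have hT := mul_pow_of_mul_eq_smul hTX (s + 1)
    have hq := (qInt_succ p (s + 1)).symm.trans (qInt_succ' p (s + 1))
    rw [pow_succ' X (s + 1), ← mul_assoc, hX, sub_mul, add_mul, smul_mul_assoc, mul_assoc, ih, hT]
    simp only [mul_add, mul_sub, mul_smul_comm, one_mul, ← mul_assoc, ← pow_succ']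
    rw [qInt_succ p (s + 1)]
    match_scalars
    · ring
    · ring
    · linear_combination p ^ (s + 1) * hq

theorem pow_succ_mul_of_mul_eq {p' : R} (hp : p' * p = 1) (hX : E * X = p • (X * E) + 1 - T)
    (hTE : T * E = p' ^ 2 • (E * T)) (s : ℕ) :
    E ^ (s + 1) * X = p ^ (s + 1) • (X * E ^ (s + 1)) +
      qInt p (s + 1) • E ^ s - (qInt p (s + 1) * p' ^ s) • (E ^ s * T) := by
  induction s with
  | zero => simp [qInt, hX]
  | succ s ih =>
    have hq := (qInt_succ p (s + 1)).symm.trans (qInt_succ' p (s + 1))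
    have hpp : p' ^ (s + 1) * p ^ (s + 1) = 1 := by rw [← mul_pow, hp, one_pow]
    rw [pow_succ E (s + 1), mul_assoc, hX]
    simp only [mul_add, mul_sub, mul_smul_comm, mul_one, ← mul_assoc]
    rw [ih]
    simp only [add_mul, sub_mul, smul_mul_assoc, mul_assoc, hTE, ← pow_succ, mul_smul_comm]
    rw [← mul_assoc (E ^ s), ← pow_succ, qInt_succ p (s + 1)]
    match_scalars
    · ring
    · ring
    · linear_combination p' ^ (s + 1) * hq + hpp - qInt p (s + 1) * p' ^ (s + 1) * hp

end Skew

end SerreElements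

/-! ### The quantum shuffle algebra -/

/-- A braiding matrix `Q` of Cartan type over a commutative ring: `A` is a generalized Cartan
matrix, `d` a symmetrizer of it, and `Q` has a parameter `v` which is not a root of unity. -/
structure CartanBraiding (R : Type*) [CommRing R] {n : ℕ} (A : Matrix (Fin n) (Fin n) ℤ) where
  d : Fin n → ℤ
  v : Rˣ
  Q : Fin n → Fin n → Rˣ
  isGCM : IsGCM A
  pos : ∀ i, 0 < d i
  symm : ∀ i j, d i * A i j = d j * A j i
  self : ∀ i, Q i i = v ^ d i
  mul_flip : ∀ i j, i ≠ j → Q i j * Q j i = v ^ (d i * A i j)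
  generic : ∀ z : ℤ, z ≠ 0 → v ^ z ≠ 1

/-- The underlying module of the quantum shuffle algebra: a function on words is thought of as a
(possibly infinite) linear combination of words. -/
abbrev Sh (R : Type*) (n : ℕ) := List (Fin n) → R

section Shuffle

variable {R : Type*} [CommRing R] {n : ℕ}

/-- The weight of a word, with values in the root lattice. -/
def wt (u : List (Fin n)) : Fin n → ℤ := (u.map ee).sum

@[simp] theorem wt_nil : wt ([] : List (Fin n)) = 0 := rfl

@[simp] theorem wt_cons (i : Fin n) (u : List (Fin n)) : wt (i :: u) = ee i + wt u := by
  simp [wt]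

theorem wt_nonneg (u : List (Fin n)) : 0 ≤ wt u := by
  induction u with
  | nil => simp
  | cons i u ih => rw [wt_cons]; exact add_nonneg (ee_pos i).le ih

/-- The skew derivation removing a first letter `i`. -/
def raise (i : Fin n) : Module.End R (Sh R n) := LinearMap.funLeft R R (List.cons i)

@[simp] theorem raise_apply (i : Fin n) (x : Sh R n) (u : List (Fin n)) :
    raise i x u = x (i :: u) := rfl

theorem Sh.ext_raise {x y : Sh R n} (h0 : x [] = y []) (h : ∀ i, raise i x = raise i y) :
    x = y := by
  funext u
  cases u with
  | nil => exact h0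
  | cons i u => exact congrFun (h i) u

/-- The elements of weight `β`. -/
def wtSh (R : Type*) [CommRing R] {n : ℕ} (β : Fin n → ℤ) : Submodule R (Sh R n) where
  carrier := {x | ∀ u, wt u ≠ β → x u = 0}
  add_mem' := fun hx hy u hu => by simp [hx u hu, hy u hu]
  zero_mem' := fun _ _ => rfl
  smul_mem' := fun c x hx u hu => by simp [hx u hu]

theorem raise_mem_wtSh {i : Fin n} {β : Fin n → ℤ} {x : Sh R n} (hx : x ∈ wtSh R β) :
    raise i x ∈ wtSh R (β - ee i) := by
  intro u hu
  refine hx (i :: u) fun h => hu ?_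
  rw [← h, wt_cons]; abel

theorem eq_zero_of_mem_wtSh {β : Fin n → ℤ} {x : Sh R n} (hx : x ∈ wtSh R β) (h : ¬ 0 ≤ β) :
    x = 0 := by
  funext u
  exact hx u fun hu => h (hu ▸ wt_nonneg u)

/-- The unit of the shuffle algebra. -/
def one (R : Type*) [CommRing R] (n : ℕ) : Sh R n := Pi.single [] 1

theorem one_mem_wtSh : one R n ∈ wtSh R 0 := by
  intro u hu
  rw [one, Pi.single_eq_of_ne]
  rintro rfl
  exact hu rfl

@[simp] theorem raise_one (i : Fin n) : raise i (one R n) = 0 := by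
  funext u; simp [one]

end Shuffle

namespace CartanBraiding

variable {R : Type*} [CommRing R] {n : ℕ} {A : Matrix (Fin n) (Fin n) ℤ} (D : CartanBraiding R A)

theorem mul_flip' (i j : Fin n) : D.Q i j * D.Q j i = D.v ^ (D.d j * A j i) := by
  by_cases h : i = j
  · subst h
    rw [D.self, ← zpow_add, D.isGCM.diag, mul_two]
  · rw [D.mul_flip i j h, D.symm]

/-- The group-like operator attached to the `j`-th simple root, as a scalar on weight `β`. -/
def chi (j : Fin n) (β : Fin n → ℤ) : Rˣ := D.v ^ (D.d j * coroot A j β)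

theorem chi_add (j : Fin n) (β γ : Fin n → ℤ) : D.chi j (β + γ) = D.chi j β * D.chi j γ := by
  rw [chi, map_add, mul_add, zpow_add]; rfl

theorem chi_ee (j i : Fin n) : D.chi j (ee i) = D.Q i j * D.Q j i := by
  rw [chi, coroot_ee, mul_flip']

@[simp] theorem chi_zero (j : Fin n) : D.chi j 0 = 1 := by simp [chi]

/-- The group-like operator attached to the `j`-th simple root. -/
def cartanOp (j : Fin n) : Module.End R (Sh R n) :=
  { toFun := fun x u => (D.chi j (wt u) : R) * x u
    map_add' := fun x y => by funext u; simp [mul_add]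
    map_smul' := fun c x => by funext u; simp [mul_left_comm] }

theorem cartanOp_apply (j : Fin n) (x : Sh R n) (u : List (Fin n)) :
    D.cartanOp j x u = (D.chi j (wt u) : R) * x u := rfl

theorem cartanOp_of_mem {j : Fin n} {β : Fin n → ℤ} {x : Sh R n} (hx : x ∈ wtSh R β) :
    D.cartanOp j x = (D.chi j β : R) • x := by
  funext u
  rw [cartanOp_apply, Pi.smul_apply, smul_eq_mul]
  by_cases h : wt u = β
  · rw [h]
  · rw [hx u h, mul_zero, mul_zero]

/-- The underlying function of `CartanBraiding.lower`. -/
def lowerFun (c : R) (j : Fin n) (x : Sh R n) : List (Fin n) → R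
  | [] => 0
  | i :: u => (if i = j then (1 - c * (D.chi j (wt u) : R)) * x u else 0) +
      (D.Q j i : R) * lowerFun c j (raise i x) u

/-- The operator adjoining a letter `j`; for `c = 0` this is multiplication by the `j`-th generator
of the quantum shuffle algebra, in general it is the action of a lowering operator on a dual
Verma module. -/
def lower (c : R) (j : Fin n) : Module.End R (Sh R n) :=
  { toFun := D.lowerFun c j
    map_add' := fun x y => by
      funext u
      induction u generalizing x y with
      | nil => simp [lowerFun]
      | cons i u ih =>
        simp only [lowerFun, Pi.add_apply, map_add, ih]
        split_ifs <;> ring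
    map_smul' := fun a x => by
      funext u
      induction u generalizing x with
      | nil => simp [lowerFun]
      | cons i u ih =>
        simp only [lowerFun, Pi.smul_apply, map_smul, ih, RingHom.id_apply, smul_eq_mul]
        split_ifs <;> ring }

@[simp] theorem lower_nil (c : R) (j : Fin n) (x : Sh R n) : D.lower c j x [] = 0 := rfl

theorem lower_cons (c : R) (j i : Fin n) (x : Sh R n) (u : List (Fin n)) :
    D.lower c j x (i :: u) = (if i = j then (1 - c * (D.chi j (wt u) : R)) * x u else 0) +
      (D.Q j i : R) * D.lower c j (raise i x) u := rfl

theorem raise_lower_self (c : R) (j : Fin n) : raise j * D.lower c j =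
    (D.Q j j : R) • (D.lower c j * raise j) + 1 - c • D.cartanOp j := by
  ext x u
  simp only [Module.End.mul_apply, raise_apply, lower_cons, if_true, LinearMap.sub_apply,
    LinearMap.add_apply, LinearMap.smul_apply, Module.End.one_apply, Pi.add_apply, Pi.sub_apply,
    Pi.smul_apply, smul_eq_mul, cartanOp_apply]
  ring

theorem raise_lower_of_ne (c : R) {i j : Fin n} (h : i ≠ j) : raise i * D.lower c j =
    (D.Q j i : R) • (D.lower c j * raise i) := by
  ext x u
  simp [lower_cons, h]

theorem lower_mem_wtSh (c : R) (j : Fin n) {β : Fin n → ℤ} {x : Sh R n} (hx : x ∈ wtSh R β) :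
    D.lower c j x ∈ wtSh R (β + ee j) := by
  intro u
  induction u generalizing x β with
  | nil => intro _; rfl
  | cons i u ih =>
    intro hu
    rw [wt_cons] at hu
    rw [lower_cons, ih (raise_mem_wtSh hx) (fun h => hu (by rw [h]; abel)), mul_zero, add_zero]
    split_ifs with h
    · subst h
      rw [hx u (fun h => hu (by rw [h]; abel)), mul_zero]
    · rfl

theorem cartanOp_raise (i j : Fin n) : D.cartanOp j * raise i =
    ((D.chi j (ee i))⁻¹ : Rˣ).val • (raise i * D.cartanOp j) := by
  ext x u
  simp only [Module.End.mul_apply, cartanOp_apply, raise_apply, LinearMap.smul_apply, Pi.smul_apply,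
    wt_cons, chi_add, smul_eq_mul, Units.val_mul]
  rw [← mul_assoc, ← mul_assoc, Units.inv_mul, one_mul]

theorem cartanOp_lower (c : R) (i j : Fin n) : D.cartanOp j * D.lower c i =
    (D.chi j (ee i) : R) • (D.lower c i * D.cartanOp j) := by
  ext x u
  induction u generalizing x with
  | nil => simp [cartanOp_apply]
  | cons l u ih =>
    have h1 := ih (raise l x)
    have h2 : raise l (D.cartanOp j x) = (D.chi j (ee l) : R) • D.cartanOp j (raise l x) := by
      funext u
      simp [cartanOp_apply, chi_add, mul_assoc]
    simp only [Module.End.mul_apply, LinearMap.smul_apply, Pi.smul_apply, smul_eq_mul,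
      cartanOp_apply, lower_cons, h2, map_smul, wt_cons, chi_add, Units.val_mul] at h1 ⊢
    split_ifs with h
    · subst h
      linear_combination (D.chi j (ee l) : R) * (D.Q l l : R) * h1
    · linear_combination (D.chi j (ee l) : R) * (D.Q i l : R) * h1

theorem smul_cartanOp_mul_lower (b c : R) (i j : Fin n) : (b • D.cartanOp j) * D.lower c i =
    (D.Q i j * D.Q j i : R) • (D.lower c i * (b • D.cartanOp j)) := by
  rw [smul_mul_assoc, cartanOp_lower, mul_smul_comm, chi_ee, Units.val_mul, smul_comm]

theorem one_sub_self_pow_mul_flip {i j : Fin n} (hij : i ≠ j) {N : ℕ} (hN : A i j = -N) :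
    1 - (D.Q i i : R) ^ N * (D.Q i j * D.Q j i) = 0 := by
  rw [sub_eq_zero]
  norm_cast
  rw [D.mul_flip i j hij, D.self, hN, ← zpow_natCast, ← zpow_mul, ← zpow_add]
  simp

section Serre

variable (lam : Fin n → R) {i j : Fin n}

/-- The element `(ad_c x_i) ^ m x_j` of the quantum Serre relations, acting on a dual Verma module
of highest weight `lam`. -/
def serreOp (i j : Fin n) (m : ℕ) : Module.End R (Sh R n) :=
  serreElt (D.Q i i : R) (D.Q i j) (D.lower (lam i) i) (D.lower (lam j) j) m

theorem serreOp_nil (m : ℕ) (x : Sh R n) : D.serreOp lam i j m x [] = 0 := by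
  induction m generalizing x with
  | zero => rfl
  | succ m ih =>
    change (D.lower (lam i) i * D.serreOp lam i j m -
      _ • (D.serreOp lam i j m * D.lower (lam i) i)) x [] = 0
    simp [ih]

theorem raise_mul_serreOp (hij : i ≠ j) {N : ℕ} (hN : A i j = -N) (a : Fin n) :
    ∃ c : R, raise a * D.serreOp lam i j (N + 1) = c • (D.serreOp lam i j (N + 1) * raise a) := by
  have hfac := D.one_sub_self_pow_mul_flip hij hN
  by_cases hai : a = i
  · subst hai
    have h := mul_serreElt_self (c := (D.Q a j : R)) (D.raise_lower_self (lam a) a)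
      (D.raise_lower_of_ne (lam j) hij) (by rw [smul_cartanOp_mul_lower, pow_two])
      (by rw [smul_cartanOp_mul_lower, mul_comm (D.Q a j : R)]) N
    rw [hfac, mul_zero, zero_smul, add_zero] at h
    exact ⟨_, h⟩
  by_cases haj : a = j
  · subst haj
    have h := mul_serreElt_other (p := (D.Q i i : R)) (D.raise_lower_of_ne (lam i) hai)
      (D.raise_lower_self (lam a) a) (D.smul_cartanOp_mul_lower (lam a) (lam i) i a) (N + 1)
    rw [Finset.prod_range_succ' (fun s => 1 - (D.Q i i : R) ^ s), Finset.prod_range_succ,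
      hfac] at h
    simp only [pow_zero, sub_self, mul_zero, zero_smul, add_zero, sub_zero] at h
    exact ⟨_, h⟩
  · exact ⟨_, mul_serreElt_of_mul_eq_smul _ _ (D.raise_lower_of_ne (lam i) hai)
      (D.raise_lower_of_ne (lam j) haj) _⟩

/-- Commuting with every skew derivation up to a scalar, the operator is determined by its values at
the empty word. -/
theorem serreOp_eq_zero (hij : i ≠ j) : D.serreOp lam i j (1 - A i j).toNat = 0 := by
  obtain ⟨N, hN⟩ : ∃ N : ℕ, A i j = -N :=
    ⟨(-A i j).toNat, by have := D.isGCM.nonpos i j hij; omega⟩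
  rw [show (1 - A i j).toNat = N + 1 by omega]
  ext x u
  induction u generalizing x with
  | nil => exact D.serreOp_nil lam _ _
  | cons a u ih =>
    obtain ⟨c, hc⟩ := D.raise_mul_serreOp lam hij hN a
    have h := congrFun (LinearMap.congr_fun hc x) u
    simp only [Module.End.mul_apply, LinearMap.smul_apply, raise_apply, Pi.smul_apply] at h
    rw [h, ih (raise a x)]
    simp

end Serre

end CartanBraiding

/-! ### Quantum simple reflections -/

section LocallyNilpotent

variable {R V : Type*} [CommRing R] [AddCommGroup V] [Module R V] {X : Module.End R V}

theorem apply_mem_maxGenEigenspace_zero_iff {x : V} :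
    X x ∈ X.maxGenEigenspace 0 ↔ x ∈ X.maxGenEigenspace 0 := by
  simp only [Module.End.mem_maxGenEigenspace, zero_smul, sub_zero]
  constructor
  · rintro ⟨N, hN⟩
    exact ⟨N + 1, by rwa [pow_succ]⟩
  · rintro ⟨N, hN⟩
    exact ⟨N, by rw [← Module.End.mul_apply, ← pow_succ, pow_succ', Module.End.mul_apply, hN,
      map_zero]⟩

theorem serreElt_apply_mem_maxGenEigenspace_zero {p c : R} {Y : Module.End R V} {M : ℕ}
    (hM : serreElt p c X Y M = 0) {m : ℕ} (hm : m ≤ M) {x : V} (hx : x ∈ X.maxGenEigenspace 0) :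
    serreElt p c X Y m x ∈ X.maxGenEigenspace 0 := by
  induction hm using Nat.decreasingInduction generalizing x with
  | self => simp [hM]
  | of_succ m _ ihm =>
    obtain ⟨N, hN⟩ := (Module.End.mem_maxGenEigenspace X 0 x).1 hx
    rw [zero_smul, sub_zero] at hN
    induction N generalizing x with
    | zero => simp [show x = 0 by simpa using hN]
    | succ N ihN =>
      have hXS : X (serreElt p c X Y m x) =
          serreElt p c X Y (m + 1) x + (p ^ m * c) • serreElt p c X Y m (X x) := by
        simp [serreElt]
      rw [← apply_mem_maxGenEigenspace_zero_iff, hXS]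
      exact add_mem (ihm hx) (Submodule.smul_mem _ _
        (ihN (apply_mem_maxGenEigenspace_zero_iff.2 hx) (by rwa [pow_succ] at hN)))

end LocallyNilpotent

section ShuffleWeights

variable {R : Type*} [CommRing R] {n : ℕ} {β : Fin n → ℤ} {x : Sh R n}

theorem wtSh_congr {γ : Fin n → ℤ} (h : β = γ) (hx : x ∈ wtSh R β) : x ∈ wtSh R γ := h ▸ hx

theorem raise_pow_mem_wtSh {i : Fin n} (hx : x ∈ wtSh R β) (m : ℕ) :
    (raise i ^ m) x ∈ wtSh R (β - (m : ℤ) • ee i) := by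
  induction m with
  | zero => simpa using hx
  | succ m ih =>
    rw [pow_succ', Module.End.mul_apply]
    exact wtSh_congr (by push_cast; module) (raise_mem_wtSh ih)

theorem exists_raise_pow_eq_zero (i : Fin n) (hx : x ∈ wtSh R β) : ∃ N, (raise i ^ N) x = 0 := by
  refine ⟨(β i).toNat + 1, eq_zero_of_mem_wtSh (raise_pow_mem_wtSh hx _) fun h => ?_⟩
  have hi : 0 ≤ β i - ((β i).toNat + 1) := by simpa [ee_apply] using h i
  omega

end ShuffleWeights

section RhoPairing

variable {n : ℕ} {A : Matrix (Fin n) (Fin n) ℤ}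

/-- The pairing `⟨ρ - β, αⱼ^∨⟩`, where `ρ` is the Weyl vector: the weight of the `j`-th coroot on
the vectors of weight `β` below a highest weight vector of weight `ρ`. -/
def rhoPairing (A : Matrix (Fin n) (Fin n) ℤ) (j : Fin n) (β : Fin n → ℤ) : ℤ := 1 - coroot A j β

@[simp] theorem rhoPairing_zero (j : Fin n) : rhoPairing A j 0 = 1 := by simp [rhoPairing]

theorem rhoPairing_add_smul (hdiag : ∀ i, A i i = 2) (j : Fin n) (β : Fin n → ℤ) (t : ℤ) :
    rhoPairing A j (β + t • ee j) = rhoPairing A j β - 2 * t := by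
  simp only [rhoPairing, map_add, map_zsmul, coroot_ee, hdiag, smul_eq_mul]
  ring

end RhoPairing

namespace CartanBraiding

variable {R : Type*} [CommRing R] {n : ℕ} {A : Matrix (Fin n) (Fin n) ℤ} (D : CartanBraiding R A)

/-- The lowering operators of the dual Verma module of highest weight `ρ`. -/
def rhoLower (j : Fin n) : Module.End R (Sh R n) := D.lower ((D.v ^ (-D.d j) : Rˣ) : R) j

/-- The scalars in the commutation relations of powers of `raise` and `rhoLower`. -/
def commCoeff (j : Fin n) (s : ℕ) (t : ℤ) : R :=
  qInt (D.Q j j : R) (s + 1) * (1 - ((D.v ^ (D.d j * t) : Rˣ) : R))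

@[simp] theorem commCoeff_zero (j : Fin n) (s : ℕ) : D.commCoeff j s 0 = 0 := by simp [commCoeff]

theorem one_sub_zpow_ne_zero {z : ℤ} (hz : z ≠ 0) : 1 - ((D.v ^ z : Rˣ) : R) ≠ 0 := by
  rw [sub_ne_zero]
  intro h
  exact D.generic z hz (Units.ext (by rw [← h, Units.val_one]))

theorem commCoeff_ne_zero [IsDomain R] (j : Fin n) (s : ℕ) {t : ℤ} (ht : t ≠ 0) :
    D.commCoeff j s t ≠ 0 := by
  have hd := (D.pos j).ne'
  refine mul_ne_zero (fun h => ?_) (D.one_sub_zpow_ne_zero (mul_ne_zero hd ht))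
  have hgeom := mul_geom_sum (D.Q j j : R) (s + 1)
  rw [← qInt, h, mul_zero, D.self] at hgeom
  refine D.one_sub_zpow_ne_zero (z := D.d j * (s + 1 : ℕ)) (mul_ne_zero hd (by positivity)) ?_
  rw [zpow_mul, zpow_natCast, Units.val_pow_eq_pow_val]
  linear_combination hgeom

theorem smul_cartanOp_of_mem {j : Fin n} {β : Fin n → ℤ} {x : Sh R n} (hx : x ∈ wtSh R β) :
    ((D.v ^ (-D.d j) : Rˣ) : R) • D.cartanOp j x =
      ((D.v ^ (-(D.d j * rhoPairing A j β)) : Rˣ) : R) • x := by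
  rw [D.cartanOp_of_mem hx, smul_smul, chi, ← Units.val_mul, ← zpow_add, rhoPairing]
  congr 3; ring

theorem raise_rhoLower_pow (j : Fin n) {β : Fin n → ℤ} {x : Sh R n} (hx : x ∈ wtSh R β) (s : ℕ) :
    raise j ((D.rhoLower j ^ (s + 1)) x) =
      (D.Q j j : R) ^ (s + 1) • (D.rhoLower j ^ (s + 1)) (raise j x) +
        D.commCoeff j s (s - rhoPairing A j β) • (D.rhoLower j ^ s) x := by
  have h := LinearMap.congr_fun (mul_pow_succ_of_mul_eq
    (D.raise_lower_self ((D.v ^ (-D.d j) : Rˣ) : R) j)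
    (by rw [smul_cartanOp_mul_lower, pow_two]) s) x
  have hv : (((D.v ^ (D.d j * (s - rhoPairing A j β)) : Rˣ)) : R) =
      (D.Q j j : R) ^ s * ((D.v ^ (-(D.d j * rhoPairing A j β)) : Rˣ) : R) := by
    rw [D.self, ← Units.val_pow_eq_pow_val, ← Units.val_mul, ← zpow_natCast, ← zpow_mul, ← zpow_add]
    congr 2; ring
  simp only [Module.End.mul_apply, LinearMap.sub_apply, LinearMap.add_apply,
    LinearMap.smul_apply, D.smul_cartanOp_of_mem hx, map_smul] at h
  rw [rhoLower, h, commCoeff, hv]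
  module

theorem raise_pow_rhoLower (j : Fin n) {β : Fin n → ℤ} {x : Sh R n} (hx : x ∈ wtSh R β) (s : ℕ) :
    (raise j ^ (s + 1)) (D.rhoLower j x) =
      (D.Q j j : R) ^ (s + 1) • D.rhoLower j ((raise j ^ (s + 1)) x) +
        D.commCoeff j s (-s - rhoPairing A j β) • (raise j ^ s) x := by
  have h := LinearMap.congr_fun (pow_succ_mul_of_mul_eq (Units.inv_mul (D.Q j j))
    (D.raise_lower_self ((D.v ^ (-D.d j) : Rˣ) : R) j)
    (by rw [smul_mul_assoc, cartanOp_raise, mul_smul_comm, chi_ee, ← pow_two, ← inv_pow,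
      Units.val_pow_eq_pow_val, smul_comm]) s) x
  have hv : (((D.v ^ (D.d j * (-s - rhoPairing A j β)) : Rˣ)) : R) =
      (((D.Q j j)⁻¹ : Rˣ) : R) ^ s * ((D.v ^ (-(D.d j * rhoPairing A j β)) : Rˣ) : R) := by
    rw [D.self, ← Units.val_pow_eq_pow_val, ← Units.val_mul, ← zpow_natCast, ← zpow_neg,
      ← zpow_mul, ← zpow_add]
    congr 2; ring
  simp only [Module.End.mul_apply, LinearMap.sub_apply, LinearMap.add_apply,
    LinearMap.smul_apply, D.smul_cartanOp_of_mem hx, map_smul] at h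
  rw [rhoLower, h, commCoeff, hv]
  module

theorem rhoLower_mem_wtSh (j : Fin n) {β : Fin n → ℤ} {x : Sh R n} (hx : x ∈ wtSh R β) :
    D.rhoLower j x ∈ wtSh R (β + ee j) := D.lower_mem_wtSh _ j hx

theorem rhoLower_pow_mem_wtSh (j : Fin n) {β : Fin n → ℤ} {x : Sh R n} (hx : x ∈ wtSh R β)
    (m : ℕ) : (D.rhoLower j ^ m) x ∈ wtSh R (β + (m : ℤ) • ee j) := by
  induction m with
  | zero => simpa using hx
  | succ m ih =>
    rw [pow_succ', Module.End.mul_apply]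
    exact wtSh_congr (by push_cast; module) (D.rhoLower_mem_wtSh j ih)

theorem raise_rhoLower_of_ne {i j : Fin n} (h : i ≠ j) (x : Sh R n) :
    raise i (D.rhoLower j x) = (D.Q j i : R) • D.rhoLower j (raise i x) :=
  LinearMap.congr_fun (D.raise_lower_of_ne _ h) x

theorem raise_rhoLower_of_mem (j : Fin n) {β : Fin n → ℤ} {x : Sh R n} (hx : x ∈ wtSh R β) :
    raise j (D.rhoLower j x) =
      (D.Q j j : R) • D.rhoLower j (raise j x) + D.commCoeff j 0 (-rhoPairing A j β) • x := by
  simpa using D.raise_rhoLower_pow j hx 0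

/-- The monomials in the lowering operators applied to the highest weight vector. -/
def rhoMonomial (u : List (Fin n)) : Sh R n := u.foldr (fun j x => D.rhoLower j x) (one R n)

@[simp] theorem rhoMonomial_nil : D.rhoMonomial [] = one R n := rfl

@[simp] theorem rhoMonomial_cons (j : Fin n) (u : List (Fin n)) :
    D.rhoMonomial (j :: u) = D.rhoLower j (D.rhoMonomial u) := rfl

theorem rhoMonomial_mem_wtSh (u : List (Fin n)) : D.rhoMonomial u ∈ wtSh R (wt u) := by
  induction u with
  | nil => exact one_mem_wtSh
  | cons j u ih => exact wtSh_congr (by rw [wt_cons, add_comm]) (D.rhoLower_mem_wtSh j ih)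

/-- The submodule generated by the highest weight vector of the dual Verma module of highest
weight `ρ`. -/
def rhoModule : Submodule R (Sh R n) := Submodule.span R (Set.range D.rhoMonomial)

theorem rhoModule_le_iff {S : Submodule R (Sh R n)} : D.rhoModule ≤ S ↔ ∀ u, D.rhoMonomial u ∈ S :=
  Submodule.span_le.trans Set.range_subset_iff

theorem rhoMonomial_mem (u : List (Fin n)) : D.rhoMonomial u ∈ D.rhoModule :=
  D.rhoModule_le_iff.1 le_rfl u

theorem rhoLower_mem (j : Fin n) {x : Sh R n} (hx : x ∈ D.rhoModule) :
    D.rhoLower j x ∈ D.rhoModule :=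
  D.rhoModule_le_iff (S := D.rhoModule.comap (D.rhoLower j)).2
    (fun u => D.rhoMonomial_mem (j :: u)) hx

theorem raise_mem (i : Fin n) {x : Sh R n} (hx : x ∈ D.rhoModule) : raise i x ∈ D.rhoModule := by
  refine D.rhoModule_le_iff (S := D.rhoModule.comap (raise i)).2 (fun u => ?_) hx
  rw [Submodule.mem_comap]
  induction u with
  | nil => simp
  | cons j u ih =>
    rw [rhoMonomial_cons]
    by_cases h : i = j
    · subst h
      rw [D.raise_rhoLower_of_mem i (D.rhoMonomial_mem_wtSh u)]
      exact add_mem (Submodule.smul_mem _ _ (D.rhoLower_mem _ ih))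
        (Submodule.smul_mem _ _ (D.rhoMonomial_mem u))
    · rw [D.raise_rhoLower_of_ne h]
      exact Submodule.smul_mem _ _ (D.rhoLower_mem _ ih)

theorem rhoLower_rhoLower_one (j : Fin n) : D.rhoLower j (D.rhoLower j (one R n)) = 0 := by
  refine Sh.ext_raise rfl fun a => ?_
  rw [map_zero]
  by_cases h : a = j
  · subst h
    simpa [pow_two] using D.raise_rhoLower_pow a (one_mem_wtSh (R := R)) 1
  · rw [D.raise_rhoLower_of_ne h, D.raise_rhoLower_of_ne h, raise_one, map_zero, smul_zero,
      map_zero, smul_zero]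

theorem rhoModule_le_maxGenEigenspace_zero (j : Fin n) :
    D.rhoModule ≤ (D.rhoLower j).maxGenEigenspace 0 := by
  refine D.rhoModule_le_iff.2 fun u => ?_
  induction u with
  | nil =>
    refine (Module.End.mem_maxGenEigenspace _ _ _).2 ⟨2, ?_⟩
    rw [zero_smul, sub_zero]
    simpa [pow_two] using D.rhoLower_rhoLower_one j
  | cons i u ih =>
    rw [rhoMonomial_cons]
    by_cases h : j = i
    · subst h
      exact apply_mem_maxGenEigenspace_zero_iff.2 ih
    · exact serreElt_apply_mem_maxGenEigenspace_zero
        (D.serreOp_eq_zero (fun j => ((D.v ^ (-D.d j) : Rˣ) : R)) h) (Nat.zero_le _) ih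

section Reflection

variable [IsDomain R] {j : Fin n} {β : Fin n → ℤ} {m : ℕ} {x : Sh R n}

theorem eq_zero_of_rhoLower_pow_eq_zero (hβ : x ∈ wtSh R β) (hm : rhoPairing A j β = m)
    (h : (D.rhoLower j ^ m) x = 0) : x = 0 := by
  obtain ⟨N, hN⟩ := exists_raise_pow_eq_zero j hβ
  refine eq_zero_of_pow_apply_eq_zero (P := fun t => wtSh R (β - t • ee j))
    (c := rhoPairing A j β) (t := 0) (fun t y hy => wtSh_congr (by module) (raise_mem_wtSh hy))
    (fun t y hy s => ⟨_, _, ?_, fun hs => D.commCoeff_ne_zero j s ?_, D.raise_rhoLower_pow j hy s⟩)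
    (by simpa using hβ) (by simpa using hm) hN h
  · rw [← Units.val_pow_eq_pow_val]
    exact Units.ne_zero _
  · rw [sub_eq_add_neg β, ← neg_smul, rhoPairing_add_smul D.isGCM.diag]
    omega

theorem eq_zero_of_raise_pow_eq_zero (hx : x ∈ D.rhoModule) (hβ : x ∈ wtSh R β)
    (hm : rhoPairing A j β = -m) (h : (raise j ^ m) x = 0) : x = 0 := by
  obtain ⟨N, hN⟩ :=
    (Module.End.mem_maxGenEigenspace _ _ _).1 (D.rhoModule_le_maxGenEigenspace_zero j hx)
  rw [zero_smul, sub_zero] at hN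
  refine eq_zero_of_pow_apply_eq_zero (P := fun t => wtSh R (β + t • ee j))
    (c := -rhoPairing A j β) (t := 0)
    (fun t y hy => wtSh_congr (by module) (D.rhoLower_mem_wtSh j hy)) (fun t y hy s => ?_)
    (by simpa using hβ) (by omega) hN h
  have hcomm := D.raise_pow_rhoLower j hy s
  set u : Rˣ := D.Q j j ^ (s + 1) with hu
  rw [← Units.val_pow_eq_pow_val, ← hu, rhoPairing_add_smul D.isGCM.diag] at hcomm
  refine ⟨(u⁻¹ : Rˣ), -((u⁻¹ : Rˣ) * D.commCoeff j s (-s - (rhoPairing A j β - 2 * t))),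
    (u⁻¹).ne_zero, fun hs => neg_ne_zero.mpr
      (mul_ne_zero (u⁻¹).ne_zero (D.commCoeff_ne_zero j s (by omega))), ?_⟩
  rw [hcomm, smul_add, smul_smul, smul_smul, Units.inv_mul, one_smul, neg_smul,
    add_neg_cancel_right]

theorem disjoint_wtSh_of_reflection
    (h : Disjoint D.rhoModule (wtSh R (β + rhoPairing A j β • ee j))) :
    Disjoint D.rhoModule (wtSh R β) := by
  rw [Submodule.disjoint_def] at h ⊢
  intro x hx hβ
  rcases le_total 0 (rhoPairing A j β) with h0 | h0
  · obtain ⟨m, hm⟩ := Int.eq_ofNat_of_zero_le h0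
    exact D.eq_zero_of_rhoLower_pow_eq_zero hβ hm
      (h _ (Module.End.pow_apply_mem_of_forall_mem _ (fun _ => D.rhoLower_mem j) _ hx)
        (hm ▸ D.rhoLower_pow_mem_wtSh j hβ m))
  · obtain ⟨m, hm⟩ := Int.eq_ofNat_of_zero_le (neg_nonneg.mpr h0)
    have hm' : rhoPairing A j β = -(m : ℤ) := by omega
    refine D.eq_zero_of_raise_pow_eq_zero hx hβ hm'
      (h _ (Module.End.pow_apply_mem_of_forall_mem _ (fun _ => D.raise_mem j) _ hx) ?_)
    rw [hm', neg_smul, ← sub_eq_add_neg]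
    exact raise_pow_mem_wtSh hβ m

end Reflection

end CartanBraiding

/-! ### Extremal vectors -/

section ExtremalWeights

variable {n : ℕ} {A : Matrix (Fin n) (Fin n) ℤ}

/-- The vector `ρ - w ρ` of the root lattice, where `ρ` is the Weyl vector: the weight, below the
highest one, of the extremal vector attached to the word `w`. -/
def extremalWt (A : Matrix (Fin n) (Fin n) ℤ) : List (Fin n) → Fin n → ℤ
  | [] => 0
  | i :: w => extremalWt A w + rhoPairing A i (extremalWt A w) • ee i

/-- The exponents with which the lowering operators along the word `w` produce the extremal vector
attached to `w`, extended by zero. -/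
def extremalExp (A : Matrix (Fin n) (Fin n) ℤ) : List (Fin n) → ℕ → ℕ
  | [], _ => 0
  | i :: w, 0 => (rhoPairing A i (extremalWt A w)).toNat
  | _ :: w, r + 1 => extremalExp A w r

theorem extremalExp_of_length_le {w : List (Fin n)} {r : ℕ} (h : w.length ≤ r) :
    extremalExp A w r = 0 := by
  induction w generalizing r with
  | nil => rfl
  | cons i w ih =>
    cases r with
    | zero => simp at h
    | succ r => exact ih (by simpa using h)

theorem extremalExp_append_singleton (w : List (Fin n)) (i : Fin n) :
    extremalExp A (w ++ [i]) w.length = 1 := by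
  induction w with
  | nil => simp [extremalExp, extremalWt]
  | cons _ _ ih => exact ih

theorem rhoPairing_extremalWt_cons (l i : Fin n) (w : List (Fin n)) :
    rhoPairing A l (extremalWt A (i :: w)) =
      rhoPairing A l (extremalWt A w) - rhoPairing A i (extremalWt A w) * A l i := by
  rw [extremalWt]
  simp only [rhoPairing, map_add, map_smul, coroot_ee, smul_eq_mul]
  ring

variable {d : Fin n → ℤ}

/-- The identity `(η, w ρ) = (w⁻¹ η, ρ)` for the symmetrized bilinear form. -/
theorem sum_mul_rhoPairing_extremalWt (hsymm : ∀ i j, d i * A i j = d j * A j i)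
    (w : List (Fin n)) (η : Fin n → ℤ) :
    ∑ l, d l * η l * rhoPairing A l (extremalWt A w) =
      ∑ l, d l * wordReflectionInv A w η l := by
  induction w generalizing η with
  | nil => simp [extremalWt]
  | cons i w ih =>
    rw [wordReflectionInv_cons, Module.End.mul_apply, ← ih]
    set c := rhoPairing A i (extremalWt A w) with hc
    have hrefl : ∀ l, d l * simpleReflection A i η l * rhoPairing A l (extremalWt A w) =
        d l * η l * rhoPairing A l (extremalWt A w) -
          if l = i then d i * coroot A i η * c else 0 := by
      intro l
      simp only [simpleReflection_apply, Pi.sub_apply, Pi.smul_apply, ee_apply, smul_eq_mul]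
      split_ifs with h
      · subst h; ring
      · ring
    have hcoroot : coroot A i η = ∑ l, A i l * η l := by
      simp [coroot, Matrix.mulVec, dotProduct]
    simp only [rhoPairing_extremalWt_cons, ← hc, hrefl, mul_sub, Finset.sum_sub_distrib,
      Finset.sum_ite_eq', Finset.mem_univ, if_true, hcoroot, Finset.mul_sum, Finset.sum_mul]
    congr 1
    exact Finset.sum_congr rfl fun l _ => by linear_combination (η l * c) * hsymm l i

theorem rhoPairing_extremalWt_pos (hsymm : ∀ i j, d i * A i j = d j * A j i) (hd : ∀ i, 0 < d i)
    {i : Fin n} {w : List (Fin n)} (h : 0 < wordReflectionInv A w (ee i)) :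
    0 < rhoPairing A i (extremalWt A w) := by
  have hsum : d i * rhoPairing A i (extremalWt A w) =
      ∑ l, d l * wordReflectionInv A w (ee i) l := by
    simp [← sum_mul_rhoPairing_extremalWt hsymm, ee_apply]
  refine pos_of_mul_pos_right (hsum ▸ ?_) (hd i).le
  obtain ⟨hnonneg, l, hl⟩ := Pi.lt_def.1 h
  exact Finset.sum_pos' (fun l _ => mul_nonneg (hd l).le (hnonneg l))
    ⟨l, Finset.mem_univ l, mul_pos (hd l) hl⟩

end ExtremalWeights

section Strings

variable {R : Type*} [CommRing R] {n : ℕ}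

/-- `HasString w m x` says that `m` lists the maximal powers of the operators `raise i` which can
be applied successively to `x` as `i` runs through the word `w`, and that they lead from `x` to a
nonzero multiple of the unit. -/
def HasString : List (Fin n) → (ℕ → ℕ) → Sh R n → Prop
  | [], _, x => ∃ c : R, c ≠ 0 ∧ x = c • one R n
  | i :: w, m, x =>
    (raise i ^ (m 0 + 1)) x = 0 ∧ HasString w (fun r => m (r + 1)) ((raise i ^ m 0) x)

namespace HasString

variable {v w : List (Fin n)} {m : ℕ → ℕ} {x : Sh R n}

theorem smul [IsDomain R] (h : HasString w m x) {c : R} (hc : c ≠ 0) : HasString w m (c • x) := by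
  induction w generalizing m x with
  | nil =>
    obtain ⟨b, hb, rfl⟩ := h
    exact ⟨c * b, mul_ne_zero hc hb, smul_smul _ _ _⟩
  | cons i w ih =>
    refine ⟨by rw [map_smul, h.1, smul_zero], ?_⟩
    rw [map_smul]
    exact ih h.2

theorem append (h : HasString v m x) (hm : ∀ r, v.length ≤ r → m r = 0) :
    HasString (v ++ w) m x := by
  induction v generalizing m x with
  | nil =>
    obtain ⟨b, hb, rfl⟩ := h
    obtain rfl : m = 0 := funext fun r => hm r (Nat.zero_le r)
    rw [List.nil_append]
    induction w with
    | nil => exact ⟨b, hb, rfl⟩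
    | cons i w ih => exact ⟨by simp, ih⟩
  | cons i v ih => exact ⟨h.1, ih h.2 fun r hr => hm (r + 1) (by simpa using hr)⟩

end HasString

end Strings

namespace CartanBraiding

variable {R : Type*} [CommRing R] {n : ℕ} {A : Matrix (Fin n) (Fin n) ℤ} (D : CartanBraiding R A)

/-- The extremal vectors of `rhoModule`. -/
def extremalVec : List (Fin n) → Sh R n
  | [] => one R n
  | i :: w => (D.rhoLower i ^ (rhoPairing A i (extremalWt A w)).toNat) (extremalVec w)

theorem extremalVec_mem (w : List (Fin n)) : D.extremalVec w ∈ D.rhoModule := by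
  induction w with
  | nil => exact D.rhoMonomial_mem []
  | cons i w ih => exact Module.End.pow_apply_mem_of_forall_mem _ (fun _ => D.rhoLower_mem i) _ ih

variable {i : Fin n} {w : List (Fin n)}

theorem toNat_rhoPairing_extremalWt (D : CartanBraiding R A)
    (h : IsReducedWord A (Set.Ioi 0) (i :: w)) :
    ((rhoPairing A i (extremalWt A w)).toNat : ℤ) = rhoPairing A i (extremalWt A w) :=
  Int.toNat_of_nonneg (rhoPairing_extremalWt_pos D.symm D.pos (h i w List.infix_rfl)).le

theorem extremalVec_mem_wtSh (h : IsReducedWord A (Set.Ioi 0) w) :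
    D.extremalVec w ∈ wtSh R (extremalWt A w) := by
  induction w with
  | nil => exact one_mem_wtSh
  | cons i w ih =>
    rw [extremalWt, ← D.toNat_rhoPairing_extremalWt h]
    exact D.rhoLower_pow_mem_wtSh i (ih h.tail) _

variable [IsDomain R]

theorem disjoint_wtSh_extremalWt_sub (w : List (Fin n)) {η : Fin n → ℤ}
    (hη : ¬ wordReflectionInv A w η ≤ 0) :
    Disjoint D.rhoModule (wtSh R (extremalWt A w - η)) := by
  induction w generalizing η with
  | nil =>
    refine Submodule.disjoint_def.2 fun x _ hx => eq_zero_of_mem_wtSh hx fun h => hη ?_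
    simpa [extremalWt] using h
  | cons i w ih =>
    rw [wordReflectionInv_cons, Module.End.mul_apply] at hη
    have hpairing : rhoPairing A i (extremalWt A (i :: w) - η) =
        -rhoPairing A i (extremalWt A w) + coroot A i η := by
      rw [extremalWt]
      simp only [rhoPairing, map_add, map_sub, map_smul, coroot_ee, D.isGCM.diag, smul_eq_mul]
      ring
    have hwt : extremalWt A (i :: w) - η + rhoPairing A i (extremalWt A (i :: w) - η) • ee i =
        extremalWt A w - simpleReflection A i η := by
      rw [hpairing, extremalWt, simpleReflection_apply]
      module
    exact D.disjoint_wtSh_of_reflection (hwt ▸ ih hη)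

theorem raise_extremalVec (h : IsReducedWord A (Set.Ioi 0) (i :: w)) :
    raise i (D.extremalVec w) = 0 :=
  Submodule.disjoint_def.1 (D.disjoint_wtSh_extremalWt_sub w (h i w List.infix_rfl).not_ge) _
    (D.raise_mem i (D.extremalVec_mem w)) (raise_mem_wtSh (D.extremalVec_mem_wtSh h.tail))

theorem exists_raise_pow_rhoLower_pow_eq_smul {β : Fin n → ℤ} {x : Sh R n} (hβ : x ∈ wtSh R β)
    (hx : raise i x = 0) {s : ℕ} (hs : s ≤ rhoPairing A i β) :
    ∃ c : R, c ≠ 0 ∧ (raise i ^ s) ((D.rhoLower i ^ s) x) = c • x := by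
  induction s with
  | zero => exact ⟨1, one_ne_zero, by simp⟩
  | succ s ih =>
    obtain ⟨c, hc, hcx⟩ := ih (by omega)
    refine ⟨D.commCoeff i s (s - rhoPairing A i β) * c,
      mul_ne_zero (D.commCoeff_ne_zero i s (by omega)) hc, ?_⟩
    rw [pow_succ, Module.End.mul_apply, D.raise_rhoLower_pow i hβ, hx, map_zero, smul_zero,
      zero_add, map_smul, hcx, smul_smul]

theorem hasString_extremalVec (h : IsReducedWord A (Set.Ioi 0) w) :
    HasString w (extremalExp A w) (D.extremalVec w) := by
  induction w with
  | nil => exact ⟨1, one_ne_zero, (one_smul _ _).symm⟩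
  | cons i w ih =>
    have hraise := D.raise_extremalVec h
    obtain ⟨c, hc, hcx⟩ := D.exists_raise_pow_rhoLower_pow_eq_smul
      (D.extremalVec_mem_wtSh h.tail) hraise (D.toNat_rhoPairing_extremalWt h).le
    refine ⟨?_, ?_⟩
    · rw [pow_succ', Module.End.mul_apply, extremalExp, extremalVec, hcx, map_smul, hraise,
        smul_zero]
    · rw [extremalExp, extremalVec, hcx]
      exact (ih h.tail).smul hc

end CartanBraiding

/-! ### The quantum Leibniz rule -/

section DiagonalOperators

variable {R : Type*} [CommRing R] {n : ℕ}

/-- The diagonal operator multiplying each word by the product of the scalars `f i` over its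
letters `i`: the action of a character of the root lattice. -/
def diagOp (f : Fin n → Rˣ) : Module.End R (Sh R n) :=
  { toFun := fun x u => ((u.map f).prod : Rˣ) * x u
    map_add' := fun x y => by funext u; simp [mul_add]
    map_smul' := fun c x => by funext u; simp [mul_left_comm] }

theorem diagOp_apply (f : Fin n → Rˣ) (x : Sh R n) (u : List (Fin n)) :
    diagOp f x u = ((u.map f).prod : Rˣ) * x u := rfl

@[simp] theorem diagOp_one (f : Fin n → Rˣ) : diagOp f (one R n) = one R n := by
  funext u
  cases u <;> simp [diagOp_apply, one]

theorem raise_diagOp (f : Fin n → Rˣ) (i : Fin n) (x : Sh R n) :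
    raise i (diagOp f x) = (f i : R) • diagOp f (raise i x) := by
  funext u
  simp [diagOp_apply, mul_assoc]

theorem prod_map_eq_prod_zpow_wt (f : Fin n → Rˣ) (u : List (Fin n)) :
    (u.map f).prod = ∏ l, f l ^ wt u l := by
  induction u with
  | nil => simp
  | cons i u ih =>
    simp only [List.map_cons, List.prod_cons, wt_cons, Pi.add_apply, zpow_add,
      Finset.prod_mul_distrib, ih]
    congr 1
    rw [Finset.prod_eq_single i]
    · simp [ee_apply]
    · intro b _ hb
      simp [ee_apply, hb]
    · simp

theorem diagOp_of_mem (f : Fin n → Rˣ) {β : Fin n → ℤ} {x : Sh R n} (hx : x ∈ wtSh R β) :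
    diagOp f x = ((∏ l, f l ^ β l : Rˣ) : R) • x := by
  funext u
  rw [diagOp_apply, Pi.smul_apply, smul_eq_mul]
  by_cases h : wt u = β
  · rw [prod_map_eq_prod_zpow_wt, h]
  · rw [hx u h, mul_zero, mul_zero]

theorem diagOp_mem_wtSh (f : Fin n → Rˣ) {β : Fin n → ℤ} {x : Sh R n} (hx : x ∈ wtSh R β) :
    diagOp f x ∈ wtSh R β := by
  rw [diagOp_of_mem f hx]
  exact (wtSh R β).smul_mem _ hx

end DiagonalOperators

section GaussianBinomials

variable {R : Type*} [CommRing R]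

/-- The Gaussian binomial coefficient of `a + b` over `b`. -/
def qBinom (p : R) : ℕ → ℕ → R
  | 0, _ => 1
  | _ + 1, 0 => 1
  | a + 1, b + 1 => p ^ (b + 1) * qBinom p a (b + 1) + qBinom p (a + 1) b

theorem qBinom_mul (p : R) (a b : ℕ) :
    qBinom p a b * ((∏ s ∈ Finset.range a, (1 - p ^ (s + 1))) *
      ∏ s ∈ Finset.range b, (1 - p ^ (s + 1))) = ∏ s ∈ Finset.range (a + b), (1 - p ^ (s + 1)) := by
  induction a generalizing b with
  | zero => simp [qBinom]
  | succ a iha =>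
    induction b with
    | zero => simp [qBinom]
    | succ b ihb =>
      have iha' := iha (b + 1)
      rw [← add_assoc] at iha'
      rw [add_right_comm a 1 b] at ihb
      rw [← add_assoc (a + 1), add_right_comm a 1 b, Finset.prod_range_succ _ (a + b + 1)]
      rw [Finset.prod_range_succ _ a] at ihb ⊢
      rw [Finset.prod_range_succ _ b] at iha' ⊢
      rw [qBinom]
      linear_combination p ^ (b + 1) * (1 - p ^ (a + 1)) * iha' + (1 - p ^ (b + 1)) * ihb

theorem qBinom_ne_zero [IsDomain R] {p : R} (hp : ∀ s : ℕ, 1 - p ^ (s + 1) ≠ 0) (a b : ℕ) :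
    qBinom p a b ≠ 0 := by
  intro h
  have hmul := qBinom_mul p a b
  rw [h, zero_mul] at hmul
  exact Finset.prod_ne_zero_iff.mpr (fun s _ => hp s) hmul.symm

end GaussianBinomials

namespace CartanBraiding

variable {R : Type*} [CommRing R] {n : ℕ} {A : Matrix (Fin n) (Fin n) ℤ} (D : CartanBraiding R A)

section ShuffleProduct

/-- The braiding of words with the letter `i` on their right, as a diagonal operator: the twist in
the Leibniz rule of the skew derivation `raise i`. -/
def rightTwist (i : Fin n) : Module.End R (Sh R n) := diagOp fun c => D.Q c i

theorem rightTwist_mem_wtSh (i : Fin n) {β : Fin n → ℤ} {x : Sh R n} (hx : x ∈ wtSh R β) :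
    D.rightTwist i x ∈ wtSh R β := diagOp_mem_wtSh _ hx

/-- The underlying function of the quantum shuffle product. -/
def starFun (x y : Sh R n) : List (Fin n) → R
  | [] => x [] * y []
  | i :: u => starFun (raise i x) y u + starFun (D.rightTwist i x) (raise i y) u

/-- The quantum shuffle product, defined by the Leibniz rule of the skew derivations `raise i`. -/
def star : Sh R n →ₗ[R] Sh R n →ₗ[R] Sh R n :=
  LinearMap.mk₂ R D.starFun
    (fun x x' y => by
      funext u
      induction u generalizing x x' y with
      | nil => simp [starFun, add_mul]
      | cons i u ih => simp only [starFun, map_add, ih, Pi.add_apply]; ring)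
    (fun c x y => by
      funext u
      induction u generalizing x y with
      | nil => simp [starFun, mul_assoc]
      | cons i u ih => simp only [starFun, map_smul, ih, Pi.smul_apply, smul_add])
    (fun x y y' => by
      funext u
      induction u generalizing x y y' with
      | nil => simp [starFun, mul_add]
      | cons i u ih => simp only [starFun, map_add, ih, Pi.add_apply]; ring)
    (fun c x y => by
      funext u
      induction u generalizing x y with
      | nil => simp [starFun, mul_left_comm]
      | cons i u ih => simp only [starFun, map_smul, ih, Pi.smul_apply, smul_add])

@[simp] theorem star_nil (x y : Sh R n) : D.star x y [] = x [] * y [] := rfl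

theorem raise_star (i : Fin n) (x y : Sh R n) :
    raise i (D.star x y) = D.star (raise i x) y + D.star (D.rightTwist i x) (raise i y) := rfl

theorem star_cons (x y : Sh R n) (i : Fin n) (u : List (Fin n)) :
    D.star x y (i :: u) = D.star (raise i x) y u + D.star (D.rightTwist i x) (raise i y) u := rfl

@[simp] theorem one_star (y : Sh R n) : D.star (one R n) y = y := by
  funext u
  induction u generalizing y with
  | nil => simp [one]
  | cons i u ih => simp [star_cons, rightTwist, ih]

@[simp] theorem star_one (x : Sh R n) : D.star x (one R n) = x := by
  funext u
  induction u generalizing x with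
  | nil => simp [one]
  | cons i u ih => simp [star_cons, ih]

theorem star_mem_wtSh {β γ : Fin n → ℤ} {x y : Sh R n} (hx : x ∈ wtSh R β) (hy : y ∈ wtSh R γ) :
    D.star x y ∈ wtSh R (β + γ) := by
  intro u
  induction u generalizing x y β γ with
  | nil =>
    intro h
    rw [star_nil]
    by_cases hβ : wt ([] : List (Fin n)) = β
    · rw [hy [] (fun hγ => h (by rw [← hβ, ← hγ]; simp)), mul_zero]
    · rw [hx [] hβ, zero_mul]
  | cons i u ih =>
    intro h
    rw [wt_cons] at h
    rw [star_cons, ih (raise_mem_wtSh hx) hy (fun e => h (by rw [e]; abel)),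
      ih (D.rightTwist_mem_wtSh i hx) (raise_mem_wtSh hy) (fun e => h (by rw [e]; abel)), add_zero]

end ShuffleProduct

section Insertion

/-- Left multiplication by a generator of the quantum shuffle algebra. -/
def ins (j : Fin n) : Module.End R (Sh R n) := D.lower 0 j

@[simp] theorem ins_nil (j : Fin n) (x : Sh R n) : D.ins j x [] = 0 := rfl

theorem raise_ins (i j : Fin n) (x : Sh R n) :
    raise i (D.ins j x) = (D.Q j i : R) • D.ins j (raise i x) + if i = j then x else 0 := by
  split_ifs with h
  · subst h
    simpa [ins] using LinearMap.congr_fun (D.raise_lower_self 0 i) x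
  · simpa [ins] using LinearMap.congr_fun (D.raise_lower_of_ne 0 h) x

theorem ins_cons (i j : Fin n) (x : Sh R n) (u : List (Fin n)) :
    D.ins j x (i :: u) = D.Q j i * D.ins j (raise i x) u + if i = j then x u else 0 := by
  simp [ins, lower_cons, add_comm]

theorem rightTwist_ins (i j : Fin n) (x : Sh R n) :
    D.rightTwist i (D.ins j x) = (D.Q j i : R) • D.ins j (D.rightTwist i x) := by
  funext u
  induction u generalizing x with
  | nil => simp [rightTwist, diagOp_apply]
  | cons l u ih =>
    have hl : D.rightTwist i (D.ins j x) (l :: u) =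
        D.Q l i * D.rightTwist i (raise l (D.ins j x)) u :=
      congrFun (raise_diagOp (fun c => D.Q c i) l (D.ins j x)) u
    have hr : raise l (D.rightTwist i x) = (D.Q l i : R) • D.rightTwist i (raise l x) :=
      raise_diagOp _ l x
    rw [hl, raise_ins, Pi.smul_apply, ins_cons, hr]
    simp only [map_add, map_smul, Pi.add_apply, Pi.smul_apply, smul_eq_mul, ih]
    split_ifs with h
    · subst h
      ring
    · simp only [map_zero, Pi.zero_apply]
      ring

theorem ins_star (j : Fin n) (x y : Sh R n) : D.star (D.ins j x) y = D.ins j (D.star x y) := by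
  funext u
  induction u generalizing x y with
  | nil => simp
  | cons i u ih =>
    rw [star_cons, ins_cons, raise_ins, rightTwist_ins, raise_star]
    simp only [map_add, map_smul, LinearMap.add_apply, LinearMap.smul_apply, Pi.smul_apply,
      Pi.add_apply, smul_eq_mul, ih]
    split_ifs
    · ring
    · simp only [map_zero, LinearMap.zero_apply, Pi.zero_apply]
      ring

/-- The braiding of the letter `j` with words on its right, as a diagonal operator. -/
def leftTwist (j : Fin n) : Module.End R (Sh R n) := diagOp (D.Q j)

theorem rightTwist_leftTwist (j : Fin n) (x : Sh R n) :
    D.rightTwist j (D.leftTwist j x) = D.cartanOp j x := by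
  funext u
  simp only [rightTwist, leftTwist, diagOp_apply, cartanOp_apply]
  rw [← mul_assoc, ← Units.val_mul]
  congr 2
  induction u with
  | nil => simp
  | cons i u ih =>
    rw [wt_cons, chi_add, ← ih, chi_ee]
    simp only [List.map_cons, List.prod_cons]
    ac_rfl

theorem lower_eq_ins_sub (c : R) (j : Fin n) (x : Sh R n) :
    D.lower c j x = D.ins j x - c • D.star (D.leftTwist j x) (D.ins j (one R n)) := by
  funext u
  induction u generalizing x with
  | nil => simp
  | cons i u ih =>
    rw [lower_cons, ih]
    simp only [Pi.sub_apply, Pi.smul_apply, smul_eq_mul]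
    rw [ins_cons, star_cons, raise_ins, raise_one, map_zero, smul_zero, zero_add, leftTwist,
      raise_diagOp, ← leftTwist, map_smul, LinearMap.smul_apply, Pi.smul_apply, smul_eq_mul]
    split_ifs with h
    · subst h
      rw [star_one, rightTwist_leftTwist, cartanOp_apply]
      ring
    · simp only [map_zero, Pi.zero_apply]
      ring

end Insertion

section Leibniz

variable {i : Fin n} {x y : Sh R n} {t : R}

theorem rightTwist_raise_of_rightTwist (ht : D.rightTwist i x = t • x) :
    D.rightTwist i (raise i x) = (((D.Q i i)⁻¹ : Rˣ) * t : R) • raise i x := by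
  have h := raise_diagOp (fun c => D.Q c i) i x
  rw [← rightTwist, ht, map_smul] at h
  rw [mul_smul, h, smul_smul, Units.inv_mul, one_smul]

theorem exists_rightTwist_raise_pow_of_rightTwist (ht : D.rightTwist i x = t • x) (a : ℕ) :
    ∃ s : R, D.rightTwist i ((raise i ^ a) x) = s • (raise i ^ a) x := by
  induction a with
  | zero => exact ⟨t, ht⟩
  | succ a ih =>
    obtain ⟨s, hs⟩ := ih
    rw [pow_succ', Module.End.mul_apply]
    exact ⟨_, D.rightTwist_raise_of_rightTwist hs⟩

theorem raise_star_of_rightTwist (ht : D.rightTwist i x = t • x) (y : Sh R n) :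
    raise i (D.star x y) = D.star (raise i x) y + t • D.star x (raise i y) := by
  rw [raise_star, ht, map_smul, LinearMap.smul_apply]

theorem raise_pow_star {a b : ℕ} (ht : D.rightTwist i x = t • x) (hx : (raise i ^ (a + 1)) x = 0)
    (hy : (raise i ^ (b + 1)) y = 0) : (raise i ^ (a + b)) (D.star x y) =
      (qBinom (((D.Q i i)⁻¹ : Rˣ) : R) a b * t ^ b) •
        D.star ((raise i ^ a) x) ((raise i ^ b) y) := by
  induction a generalizing x y b t with
  | zero =>
    induction b generalizing y with
    | zero => simp [qBinom]
    | succ b ih =>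
      have hx' : raise i x = 0 := by simpa using hx
      have hb := ih (y := raise i y) (by rwa [pow_succ] at hy)
      rw [zero_add] at hb
      rw [zero_add, pow_succ, Module.End.mul_apply, D.raise_star_of_rightTwist ht, hx', map_zero,
        LinearMap.zero_apply, zero_add, map_smul, hb, smul_smul, pow_succ, Module.End.mul_apply]
      simp only [qBinom, pow_zero, Module.End.one_apply]
      congr 1
      ring
  | succ a iha =>
    induction b generalizing y with
    | zero =>
      have hy' : raise i y = 0 := by simpa using hy
      have ha := iha (b := 0) (D.rightTwist_raise_of_rightTwist ht) (by rwa [pow_succ] at hx) hy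
      rw [add_zero] at ha
      rw [add_zero, pow_succ, Module.End.mul_apply, D.raise_star_of_rightTwist ht, hy', map_zero,
        smul_zero, add_zero, ha]
      cases a <;> simp [qBinom]
    | succ b ihb =>
      have ha := iha (D.rightTwist_raise_of_rightTwist ht) (by rwa [pow_succ] at hx) hy
      have hb := ihb (y := raise i y) (by rwa [pow_succ] at hy)
      rw [← add_assoc, pow_succ, Module.End.mul_apply, D.raise_star_of_rightTwist ht, map_add,
        map_smul, hb, add_right_comm a 1 b, add_assoc a b 1, ha,
        ← Module.End.mul_apply (raise i ^ a), ← pow_succ, ← Module.End.mul_apply (raise i ^ b),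
        ← pow_succ, qBinom]
      module

theorem raise_pow_succ_star_eq_zero {a b : ℕ} (ht : D.rightTwist i x = t • x)
    (hx : (raise i ^ (a + 1)) x = 0) (hy : (raise i ^ (b + 1)) y = 0) :
    (raise i ^ (a + b + 1)) (D.star x y) = 0 := by
  obtain ⟨s, hs⟩ := D.exists_rightTwist_raise_pow_of_rightTwist ht a
  rw [pow_succ', Module.End.mul_apply] at hx hy ⊢
  rw [D.raise_pow_star ht (by rwa [pow_succ']) (by rwa [pow_succ']), map_smul,
    D.raise_star_of_rightTwist hs, hx, hy]
  simp

theorem qBinom_self_ne_zero [IsDomain R] (i : Fin n) (a b : ℕ) :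
    qBinom (((D.Q i i)⁻¹ : Rˣ) : R) a b ≠ 0 := by
  refine qBinom_ne_zero (fun s => ?_) _ _
  rw [D.self, ← zpow_neg, ← Units.val_pow_eq_pow_val, ← zpow_natCast, ← zpow_mul]
  refine D.one_sub_zpow_ne_zero (mul_ne_zero (neg_ne_zero.mpr (D.pos i).ne') ?_)
  positivity

theorem hasString_star [IsDomain R] {w : List (Fin n)} {m m' : ℕ → ℕ} {β : Fin n → ℤ}
    (hβ : x ∈ wtSh R β) (hx : HasString w m x) (hy : HasString w m' y) :
    HasString w (m + m') (D.star x y) := by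
  induction w generalizing m m' x y β with
  | nil =>
    obtain ⟨c, hc, rfl⟩ := hx
    obtain ⟨c', hc', rfl⟩ := hy
    exact ⟨c * c', mul_ne_zero hc hc', by simp [mul_smul, smul_comm c c']⟩
  | cons i w ih =>
    have ht : D.rightTwist i x = _ • x := diagOp_of_mem _ hβ
    refine ⟨D.raise_pow_succ_star_eq_zero ht hx.1 hy.1, ?_⟩
    rw [Pi.add_apply, D.raise_pow_star ht hx.1 hy.1]
    refine (ih (raise_pow_mem_wtSh hβ (m 0)) hx.2 hy.2).smul
      (mul_ne_zero (D.qBinom_self_ne_zero i _ _) ?_)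
    rw [← Units.val_pow_eq_pow_val]
    exact Units.ne_zero _

end Leibniz

end CartanBraiding

/-! ### Monomials in the extremal vectors -/

namespace HasString

variable {R : Type*} [CommRing R] {n : ℕ}

theorem raise_pow_eq_zero {i : Fin n} {w : List (Fin n)} {m : ℕ → ℕ} {x : Sh R n}
    (h : HasString (i :: w) m x) {M : ℕ} (hM : m 0 < M) : (raise i ^ M) x = 0 := by
  obtain ⟨l, rfl⟩ := Nat.exists_eq_add_of_lt hM
  rw [add_right_comm, add_comm, pow_add, Module.End.mul_apply, h.1, map_zero]

theorem linearIndepOn [IsDomain R] {ι : Type*} {w : List (Fin n)} {s : Finset ι} {y : ι → Sh R n}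
    {m : ι → ℕ → ℕ} (hy : ∀ a ∈ s, HasString w (m a) (y a))
    (hm : Set.InjOn (fun a (r : Fin w.length) => m a r) s) : LinearIndepOn R y (s : Set ι) := by
  classical
  rw [linearIndepOn_finset_iff]
  intro g h
  induction w generalizing s y m with
  | nil =>
    intro a ha
    have hs : s = {a} :=
      Finset.eq_singleton_iff_unique_mem.2 ⟨ha, fun b hb => hm hb ha (funext fun r => r.elim0)⟩
    obtain ⟨c, hc, hyc⟩ := hy a ha
    rw [hs, Finset.sum_singleton, hyc, smul_smul] at h
    simpa [one, hc] using congrFun h []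
  | cons i w ih =>
    by_contra! hcon
    obtain ⟨a₀, ha₀, hg₀⟩ := hcon
    obtain ⟨a₁, ha₁, hmax⟩ := Finset.exists_max_image {a ∈ s | g a ≠ 0} (fun a => m a 0)
      ⟨a₀, Finset.mem_filter.2 ⟨ha₀, hg₀⟩⟩
    rw [Finset.mem_filter] at ha₁
    have hlow : ∀ a ∈ s, m a 0 ≠ m a₁ 0 → g a • (raise i ^ m a₁ 0) (y a) = 0 := by
      intro a ha hne
      by_cases hg : g a = 0
      · rw [hg, zero_smul]
      · rw [(hy a ha).raise_pow_eq_zero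
          ((hmax a (Finset.mem_filter.2 ⟨ha, hg⟩)).lt_of_ne hne), smul_zero]
    have hsum : ∑ a ∈ s with m a 0 = m a₁ 0, g a • (raise i ^ m a₁ 0) (y a) = 0 := by
      rw [Finset.sum_filter_of_ne fun a ha => not_imp_comm.1 (hlow a ha)]
      simpa only [map_sum, map_smul, map_zero] using congrArg (raise i ^ m a₁ 0) h
    refine ha₁.2 (ih (m := fun a r => m a (r + 1)) (fun a ha => ?_) (fun a ha b hb hab => ?_) hsum
      a₁ (Finset.mem_filter.2 ⟨ha₁.1, rfl⟩))
    · obtain ⟨has, ha0⟩ := Finset.mem_filter.1 ha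
      exact ha0 ▸ (hy a has).2
    · obtain ⟨has, ha0⟩ := Finset.mem_filter.1 ha
      obtain ⟨hbs, hb0⟩ := Finset.mem_filter.1 hb
      exact hm has hbs (funext (Fin.cases (ha0.trans hb0.symm) (congrFun hab)))

end HasString

theorem eq_of_sum_nsmul_eq_of_unitriangular {L : ℕ} {e : Fin L → ℕ → ℕ} (hdiag : ∀ p, e p p = 1)
    (hlt : ∀ (p : Fin L) (r : ℕ), p < r → e p r = 0) {b b' : Fin L → ℕ}
    (h : ∀ r < L, ∑ p, b p • e p r = ∑ p, b' p • e p r) : b = b' := by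
  let M : Matrix (Fin L) (Fin L) ℤ := Matrix.of fun p r => e p r
  have hM : M.det ≠ 0 := by
    rw [Matrix.det_of_isLowerTriangular M fun p r hpr => by simp [M, hlt p r hpr]]
    simp [M, hdiag]
  have hv : Matrix.vecMul (fun p => (b p : ℤ) - b' p) M = 0 := by
    funext r
    have hr := congrArg (Nat.cast (R := ℤ)) (h r r.2)
    push_cast [smul_eq_mul] at hr
    simp [Matrix.vecMul, dotProduct, M, sub_mul, hr]
  funext p
  have hp := congrFun (Matrix.eq_zero_of_vecMul_eq_zero hM hv) p
  exact_mod_cast sub_eq_zero.1 hp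

namespace CartanBraiding

variable {R : Type*} [CommRing R] {n : ℕ} {A : Matrix (Fin n) (Fin n) ℤ} (D : CartanBraiding R A)

section Filtration

/-- The monomials in the generators of the quantum shuffle algebra. -/
def monomial (u : List (Fin n)) : Sh R n := u.foldr (fun j x => D.ins j x) (one R n)

@[simp] theorem monomial_nil : D.monomial [] = one R n := rfl

@[simp] theorem monomial_cons (j : Fin n) (u : List (Fin n)) :
    D.monomial (j :: u) = D.ins j (D.monomial u) := rfl

theorem monomial_mem_wtSh (u : List (Fin n)) : D.monomial u ∈ wtSh R (wt u) := by
  induction u with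
  | nil => exact one_mem_wtSh
  | cons j u ih => exact wtSh_congr (by rw [wt_cons, add_comm]) (D.lower_mem_wtSh 0 j ih)

theorem monomial_star_monomial (u v : List (Fin n)) :
    D.star (D.monomial u) (D.monomial v) = D.monomial (u ++ v) := by
  induction u with
  | nil => simp
  | cons j u ih => rw [monomial_cons, ins_star, ih, List.cons_append, monomial_cons]

/-- The span of the monomials of length at most `N`. -/
def filtration (N : ℕ) : Submodule R (Sh R n) :=
  Submodule.span R (D.monomial '' {u | u.length ≤ N})

theorem monomial_mem_filtration {u : List (Fin n)} {N : ℕ} (h : u.length ≤ N) :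
    D.monomial u ∈ D.filtration N :=
  Submodule.subset_span ⟨u, h, rfl⟩

theorem filtration_mono : Monotone D.filtration := fun _ _ h =>
  Submodule.span_mono (Set.image_mono fun _ hu => hu.trans h)

variable {N N' : ℕ} {x y : Sh R n}

theorem star_mem_filtration (hx : x ∈ D.filtration N) (hy : y ∈ D.filtration N') :
    D.star x y ∈ D.filtration (N + N') := by
  have h := Submodule.apply_mem_map₂ D.star hx hy
  rw [filtration, filtration, Submodule.map₂_span_span] at h
  refine Submodule.span_le.2 ?_ h
  rintro _ ⟨_, ⟨u, hu, rfl⟩, _, ⟨v, hv, rfl⟩, rfl⟩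
  beta_reduce
  rw [SetLike.mem_coe, monomial_star_monomial]
  exact D.monomial_mem_filtration (List.length_append.trans_le (add_le_add hu hv))

theorem rhoLower_mem_filtration (j : Fin n) (hx : x ∈ D.filtration N) :
    D.rhoLower j x ∈ D.filtration (N + 1) := by
  refine (Submodule.span_le (p := (D.filtration (N + 1)).comap (D.rhoLower j))).2 ?_ hx
  rintro _ ⟨u, hu, rfl⟩
  rw [SetLike.mem_coe, Submodule.mem_comap, rhoLower, lower_eq_ins_sub, leftTwist,
    diagOp_of_mem _ (D.monomial_mem_wtSh u), map_smul, LinearMap.smul_apply]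
  refine sub_mem (D.monomial_mem_filtration (u := j :: u) (Nat.succ_le_succ hu))
    (Submodule.smul_mem _ _ (Submodule.smul_mem _ _ ?_))
  exact D.star_mem_filtration (D.monomial_mem_filtration hu)
    (D.monomial_mem_filtration (u := [j]) le_rfl)

theorem rhoLower_pow_mem_filtration (j : Fin n) (hx : x ∈ D.filtration N) (m : ℕ) :
    (D.rhoLower j ^ m) x ∈ D.filtration (N + m) := by
  induction m with
  | zero => simpa using hx
  | succ m ih =>
    rw [pow_succ']
    exact D.rhoLower_mem_filtration j ih

theorem exists_extremalVec_mem_filtration (w : List (Fin n)) :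
    ∃ N, D.extremalVec w ∈ D.filtration N := by
  induction w with
  | nil => exact ⟨0, D.monomial_mem_filtration (u := []) le_rfl⟩
  | cons i w ih =>
    obtain ⟨N, hN⟩ := ih
    exact ⟨_, D.rhoLower_pow_mem_filtration i hN _⟩

end Filtration

section ExtremalMonomials

variable [IsDomain R]

/-- The pairs of a filtration degree and of string exponents along `w` realised by some
homogeneous element. -/
def stringMonoid (w : List (Fin n)) : AddSubmonoid (ℕ × (ℕ → ℕ)) where
  carrier := {a | ∃ β, ∃ x ∈ wtSh R β, x ∈ D.filtration a.1 ∧ HasString w a.2 x}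
  zero_mem' := by
    have h : HasString ([] : List (Fin n)) 0 (one R n) := ⟨1, one_ne_zero, (one_smul _ _).symm⟩
    exact ⟨0, one R n, one_mem_wtSh, D.monomial_mem_filtration (u := []) le_rfl,
      h.append fun _ _ => rfl⟩
  add_mem' := by
    rintro a b ⟨β, x, hx, hxf, hxs⟩ ⟨γ, y, hy, hyf, hys⟩
    exact ⟨β + γ, D.star x y, D.star_mem_wtSh hx hy, D.star_mem_filtration hxf hyf,
      D.hasString_star hx hxs hys⟩

variable {w : List (Fin n)}

theorem exists_mem_stringMonoid (hw : IsReducedWord A (Set.Ioi 0) w) :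
    ∃ N, ∀ p : Fin w.length, (N, extremalExp A (w.take (p + 1))) ∈ D.stringMonoid w := by
  choose N hN using fun p : Fin w.length => D.exists_extremalVec_mem_filtration (w.take (p + 1))
  refine ⟨∑ p, N p, fun p => ?_⟩
  have hp : IsReducedWord A (Set.Ioi 0) (w.take (p + 1)) :=
    hw.of_infix (List.take_prefix _ w).isInfix
  refine ⟨_, _, D.extremalVec_mem_wtSh hp,
    D.filtration_mono (Finset.single_le_sum (fun _ _ => Nat.zero_le _) (Finset.mem_univ p)) (hN p),
    ?_⟩
  have hs := (D.hasString_extremalVec hp).append (w := w.drop (p + 1))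
    fun r hr => extremalExp_of_length_le hr
  rwa [List.take_append_drop] at hs

/-- The vectors are the monomials in the extremal vectors of the initial segments of `w`. -/
theorem exists_linearIndependent (hw : IsReducedWord A (Set.Ioi 0) w) :
    ∃ N, ∀ K, ∃ y : (Fin w.length → Fin (K + 1)) → Sh R n, LinearIndependent R y ∧
      ∀ b, y b ∈ D.filtration (w.length * K * N) := by
  obtain ⟨N, hN⟩ := D.exists_mem_stringMonoid hw
  refine ⟨N, fun K => ?_⟩
  have hmem : ∀ b : Fin w.length → Fin (K + 1),
      ∑ p, (b p : ℕ) • (N, extremalExp A (w.take (p + 1))) ∈ D.stringMonoid w := fun b =>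
    sum_mem fun p _ => nsmul_mem (hN p) _
  choose _ y _ hf hs using hmem
  refine ⟨y, ?_, fun b => D.filtration_mono ?_ (hf b)⟩
  · rw [← linearIndepOn_univ_iff, ← Finset.coe_univ]
    refine HasString.linearIndepOn (fun b _ => hs b) fun b _ b' _ hbb => ?_
    have hval : (fun p => (b p : ℕ)) = fun p => (b' p : ℕ) := by
      refine eq_of_sum_nsmul_eq_of_unitriangular (e := fun p => extremalExp A (w.take (p + 1)))
        (fun p => ?_) (fun p r hpr => extremalExp_of_length_le (by rw [List.length_take]; omega))
        fun r hr => ?_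
      · have h := extremalExp_append_singleton (A := A) (w.take p) w[(p : ℕ)]
        rwa [List.take_append_getElem p.2, List.length_take, min_eq_left p.2.le] at h
      · simpa [Prod.snd_sum, Finset.sum_apply] using congrFun hbb ⟨r, hr⟩
    exact funext fun p => Fin.ext (congrFun hval p)
  · simp only [Prod.fst_sum, Prod.smul_fst, smul_eq_mul]
    calc ∑ p, (b p : ℕ) * N ≤ ∑ _p : Fin w.length, K * N :=
          Finset.sum_le_sum fun p _ => Nat.mul_le_mul_right _ (Fin.is_le _)
      _ = w.length * K * N := by simp [mul_assoc]

end ExtremalMonomials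

end CartanBraiding

/-! ### Specialization and growth -/

section Deformation

open PowerSeries

variable {k : Type*} [Field k]

/-- The one-parameter deformation `q + X` of a nonzero scalar. -/
def deformUnit (q : kˣ) : k⟦X⟧ˣ :=
  (isUnit_iff_constantCoeff (φ := C (q : k) + X)).2 (by simp) |>.unit

theorem val_deformUnit (q : kˣ) : (deformUnit q : k⟦X⟧) = C (q : k) + X := rfl

theorem map_constantCoeff_deformUnit (q : kˣ) :
    Units.map (constantCoeff (R := k)).toMonoidHom (deformUnit q) = q :=
  Units.ext (by simp [val_deformUnit])

theorem deformUnit_zpow_ne_one [CharZero k] (q : kˣ) {z : ℤ} (hz : z ≠ 0) :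
    deformUnit q ^ z ≠ 1 := by
  rw [Ne, ← pow_natAbs_eq_one]
  intro h
  have hd : derivative k ((deformUnit q : k⟦X⟧) ^ z.natAbs) = 0 := by
    rw [← Units.val_pow_eq_pow_val, h, Units.val_one, Derivation.map_one_eq_zero]
  have hv : derivative k (deformUnit q : k⟦X⟧) = 1 := by simp [val_deformUnit]
  rw [Derivation.leibniz_pow, hv, smul_eq_mul, mul_one, ← Units.val_pow_eq_pow_val, nsmul_eq_mul,
    Units.mul_left_eq_zero] at hd
  have hc := congrArg constantCoeff hd
  rw [map_natCast, map_zero, Nat.cast_eq_zero, Int.natAbs_eq_zero] at hc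
  exact hz hc

theorem CartanBraiding.exists_constantCoeff_eq [CharZero k] {n : ℕ}
    {A : Matrix (Fin n) (Fin n) ℤ} (hA : IsGCM A) {d : Fin n → ℤ} (hd : ∀ i, 0 < d i)
    (hsym : ∀ i j, d i * A i j = d j * A j i) {q : kˣ} {Q : Fin n → Fin n → kˣ}
    (hQd : ∀ i, Q i i = q ^ d i) (hQo : ∀ i j, i ≠ j → Q i j * Q j i = q ^ (d i * A i j)) :
    ∃ D : CartanBraiding k⟦X⟧ A, ∀ i j, constantCoeff (D.Q i j : k⟦X⟧) = Q i j := by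
  let c : kˣ →* k⟦X⟧ˣ := Units.map (C (R := k)).toMonoidHom
  let m : Fin n → Fin n → ℤ := fun i j => if i = j then d i else if i < j then d i * A i j else 0
  have hm : ∀ i j, i ≠ j → m i j + m j i = d i * A i j := by
    intro i j hij
    obtain h | h := hij.lt_or_gt
    · simp [m, hij, hij.symm, h, h.not_gt]
    · simp [m, hij, hij.symm, h, h.not_gt, hsym i j]
  have hdeform : ∀ z : ℤ, c (q ^ z) * (deformUnit q * (c q)⁻¹) ^ z = deformUnit q ^ z := by
    intro z
    rw [map_zpow, ← mul_zpow, mul_comm, inv_mul_cancel_right]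
  refine ⟨⟨d, deformUnit q, fun i j => c (Q i j) * (deformUnit q * (c q)⁻¹) ^ m i j, hA, hd, hsym,
    fun i => ?_, fun i j hij => ?_, fun z => deformUnit_zpow_ne_one q⟩, fun i j => ?_⟩
  · simp only [m, if_true, hQd]
    exact hdeform (d i)
  · rw [mul_mul_mul_comm, ← map_mul, ← zpow_add, hm i j hij, hQo i j hij]
    exact hdeform (d i * A i j)
  · have hc : ∀ a, Units.map (constantCoeff (R := k)).toMonoidHom (c a) = a := fun a =>
      Units.ext (by simp [c])
    change (Units.map (constantCoeff (R := k)).toMonoidHom _ : kˣ).val = _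
    rw [map_mul, map_zpow, map_mul, map_inv, map_constantCoeff_deformUnit, hc, hc, mul_inv_cancel,
      one_zpow, mul_one]

end Deformation

section Growth

variable {k B : Type*} [Field k] [Ring B] [Algebra k B]

theorem tendsto_mul_one_sub_div_log (a b : ℝ) :
    Filter.Tendsto (fun d : ℕ => a * (1 - b / Real.log d)) Filter.atTop (nhds a) := by
  have h : Filter.Tendsto (fun d : ℕ => b / Real.log d) Filter.atTop (nhds 0) :=
    (Real.tendsto_log_atTop.comp tendsto_natCast_atTop_atTop).const_div_atTop _
  simpa using (h.const_sub 1).const_mul a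

theorem mul_one_sub_log_div_log_le_logb {N E d r : ℕ} (hd : 2 ≤ d)
    (h : (d / (E + 1) + 1) ^ N ≤ r) :
    N * (1 - Real.log (E + 1) / Real.log d) ≤ Real.logb d r := by
  have hd' : (1 : ℝ) < d := by exact_mod_cast hd
  have hlog : 0 < Real.log d := Real.log_pos hd'
  have hE : (0 : ℝ) < E + 1 := by positivity
  have hle : ((d : ℝ) / (E + 1)) ^ N ≤ r := by
    refine le_trans ?_ (Nat.cast_le.2 h)
    push_cast
    refine pow_le_pow_left₀ (by positivity) ?_ N
    rw [div_le_iff₀ hE]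
    exact_mod_cast (Nat.lt_div_mul_add (a := d) (b := E + 1) E.succ_pos).le.trans_eq (by ring)
  calc N * (1 - Real.log (E + 1) / Real.log d)
      = Real.logb d (((d : ℝ) / (E + 1)) ^ N) := by
        rw [Real.logb, Real.log_pow, Real.log_div (by positivity) hE.ne']
        field_simp
    _ ≤ Real.logb d r := Real.logb_le_logb_of_le hd' (by positivity) hle

theorem natCast_le_GKdim_of_pow_le_finrank (S : Finset B) {N E : ℕ}
    (h : ∀ d K : ℕ, K * (E + 1) ≤ d → (K + 1) ^ N ≤
      Module.finrank k ((Submodule.span k (insert (1 : B) (S : Set B))) ^ d : Submodule k B)) :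
    (N : ℝ≥0∞) ≤ GKdim k B := by
  refine le_trans ?_ (le_iSup _ S)
  have hlim := ENNReal.tendsto_ofReal (tendsto_mul_one_sub_div_log N (Real.log (E + 1)))
  rw [← ENNReal.ofReal_natCast, ← hlim.limsup_eq]
  refine Filter.limsup_le_limsup ?_
  filter_upwards [Filter.eventually_ge_atTop 2] with d hd
  exact ENNReal.ofReal_le_ofReal
    (mul_one_sub_log_div_log_le_logb hd (h d _ (Nat.div_mul_le_self d (E + 1))))

theorem prod_map_mem_span_insert_one_pow {ι : Type*} (x : ι → B) {u : List ι} {d : ℕ}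
    (h : u.length ≤ d) : (u.map x).prod ∈ Submodule.span k (insert 1 (Set.range x)) ^ d := by
  induction u generalizing d with
  | nil =>
    simpa using Submodule.pow_mem_pow _
      (Submodule.subset_span (R := k) (Set.mem_insert 1 (Set.range x))) d
  | cons i u ih =>
    obtain ⟨d, rfl⟩ := Nat.exists_eq_add_of_lt (Nat.zero_lt_of_lt h)
    rw [List.map_cons, List.prod_cons, pow_succ']
    exact Submodule.mul_mem_mul (Submodule.subset_span (Set.mem_insert_of_mem _ ⟨i, rfl⟩))
      (ih (Nat.le_of_succ_le_succ h))

end Growth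

section QuantumSerre

theorem qb_smul_ee_add {k : Type*} [Field k] {n : ℕ} (Q : Fin n → Fin n → kˣ) (i j : Fin n)
    (m : ℕ) : qb Q (ee i) ((m : ℤ) • ee i + ee j) = Q i i ^ m * Q i j := by
  have hi : ∀ a, a ≠ i → ∏ b, Q a b ^ (ee i a * ((m : ℤ) • ee i + ee j) b) = 1 := by
    intro a ha
    simp [ee_apply, ha]
  have hm : ∏ b, Q i b ^ (m * ee i b) = Q i i ^ m := by
    rw [Finset.prod_eq_single i (fun b _ hb => by simp [ee_apply, hb]) (by simp)]
    simp [ee_apply]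
  have hj : ∏ b, Q i b ^ ee j b = Q i j := by
    rw [Finset.prod_eq_single j (fun b _ hb => by simp [ee_apply, hb]) (by simp)]
    simp [ee_apply]
  rw [qb, Finset.prod_eq_single i (fun a _ => hi a) (by simp)]
  simp only [Pi.add_apply, Pi.smul_apply, smul_eq_mul, ee_apply i i, if_true, one_mul, zpow_add,
    Finset.prod_mul_distrib, hm, hj]

theorem adIter_snd {k : Type*} [Field k] {n : ℕ} (Q : Fin n → Fin n → kˣ) (i j : Fin n) (m : ℕ) :
    (adIter Q i m (gen Q j)).2 = (m : ℤ) • ee i + ee j := by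
  induction m with
  | zero => simp [adIter, gen]
  | succ m ih =>
    change ee i + (adIter Q i m (gen Q j)).2 = _
    rw [ih]
    push_cast
    module

theorem map_adIter {k B : Type*} [Field k] [Ring B] [Algebra k B] {n : ℕ}
    (φ : FreeAlgebra k (Fin n) →ₐ[k] B) (Q : Fin n → Fin n → kˣ) (i j : Fin n) (m : ℕ) :
    φ (adIter Q i m (gen Q j)).1 = serreElt (Q i i : k) (Q i j : k) (φ (FreeAlgebra.ι k i))
      (φ (FreeAlgebra.ι k j)) m := by
  induction m with
  | zero => rfl
  | succ m ih =>
    have hq := qb_smul_ee_add Q i j m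
    rw [← adIter_snd Q i j m] at hq
    change φ (FreeAlgebra.ι k i * _ - (qb Q (ee i) _ : k) • (_ * FreeAlgebra.ι k i)) = _
    simp [hq, ih, serreElt]

variable {R : Type*} [CommRing R]

theorem comp_serreElt {M M' : Type*} [AddCommGroup M] [Module R M] [AddCommGroup M'] [Module R M']
    {ψ : M →ₗ[R] M'} {X Y : Module.End R M} {X' Y' : Module.End R M'} (hX : ψ ∘ₗ X = X' ∘ₗ ψ)
    (hY : ψ ∘ₗ Y = Y' ∘ₗ ψ) (p c : R) (m : ℕ) :
    ψ ∘ₗ serreElt p c X Y m = serreElt p c X' Y' m ∘ₗ ψ := by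
  induction m with
  | zero => exact hY
  | succ m ih =>
    simp only [serreElt, Module.End.mul_eq_comp, LinearMap.comp_sub, LinearMap.sub_comp,
      LinearMap.comp_smul, LinearMap.smul_comp]
    rw [← LinearMap.comp_assoc, hX, LinearMap.comp_assoc, ih, ← LinearMap.comp_assoc X, ih,
      LinearMap.comp_assoc, hX]
    simp only [LinearMap.comp_assoc]

theorem serreElt_map {S B : Type*} [CommRing S] [Ring B] [Algebra R B] [Algebra S B] {f : R →+* S}
    (hf : ∀ (r : R) (b : B), f r • b = r • b) (p c : R) (X Y : B) (m : ℕ) :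
    serreElt (f p) (f c) X Y m = serreElt p c X Y m := by
  induction m with
  | zero => rfl
  | succ m ih => rw [serreElt, serreElt, ih, ← map_pow, ← map_mul, hf]

end QuantumSerre

section Truncation

theorem sum_wt {n : ℕ} (u : List (Fin n)) : ∑ l, wt u l = u.length := by
  induction u with
  | nil => simp
  | cons i u ih => simp [Finset.sum_add_distrib, ih, ee, add_comm]

/-- The restriction of functions to words of length at most `d`. -/
def trunc (R : Type*) [CommRing R] (n d : ℕ) : Module.End R (Sh R n) where
  toFun x u := if u.length ≤ d then x u else 0
  map_add' x y := by funext u; by_cases h : u.length ≤ d <;> simp [h]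
  map_smul' c x := by funext u; by_cases h : u.length ≤ d <;> simp [h]

theorem trunc_of_mem_wtSh {R : Type*} [CommRing R] {n : ℕ} {u : List (Fin n)} {x : Sh R n}
    (hx : x ∈ wtSh R (wt u)) (d : ℕ) : trunc R n d x = if u.length ≤ d then x else 0 := by
  funext t
  change (if t.length ≤ d then x t else 0) = _
  by_cases h : t.length = u.length
  · rw [h]
    split_ifs <;> rfl
  · have hxt : x t = 0 := hx t fun e => h (by exact_mod_cast sum_wt t ▸ e ▸ sum_wt u)
    split_ifs <;> simp [hxt]

end Truncation

namespace CartanBraiding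

section IntegralForm

variable {R : Type*} [CommRing R] {n : ℕ} {A : Matrix (Fin n) (Fin n) ℤ} (D : CartanBraiding R A)

/-- The integral form of the positive part of the quantum group, as the subalgebra of the quantum
shuffle algebra generated by the letters. -/
def integralForm : Submodule R (Sh R n) := Submodule.span R (Set.range D.monomial)

theorem monomial_mem_integralForm (u : List (Fin n)) : D.monomial u ∈ D.integralForm :=
  Submodule.subset_span ⟨u, rfl⟩

theorem ins_mem_integralForm (i : Fin n) : ∀ x ∈ D.integralForm, D.ins i x ∈ D.integralForm := by
  refine Submodule.span_le (p := D.integralForm.comap (D.ins i)).2 ?_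
  rintro _ ⟨u, rfl⟩
  exact D.monomial_mem_integralForm (i :: u)

theorem filtration_fg (d : ℕ) : (D.filtration d).FG :=
  Submodule.fg_span ((List.finite_length_le (Fin n) d).image _)

theorem trunc_monomial (d : ℕ) (u : List (Fin n)) :
    trunc R n d (D.monomial u) = if u.length ≤ d then D.monomial u else 0 :=
  trunc_of_mem_wtSh (D.monomial_mem_wtSh u) d

theorem trunc_eq_self {d : ℕ} {x : Sh R n} (hx : x ∈ D.filtration d) : trunc R n d x = x := by
  refine LinearMap.eqOn_span (g := LinearMap.id) ?_ hx
  rintro _ ⟨u, hu, rfl⟩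
  exact (D.trunc_monomial d u).trans (if_pos hu)

theorem trunc_mem_filtration (d : ℕ) {x : Sh R n} (hx : x ∈ D.integralForm) :
    trunc R n d x ∈ D.filtration d := by
  refine (Submodule.span_le (p := (D.filtration d).comap (trunc R n d))).2 ?_ hx
  rintro _ ⟨u, rfl⟩
  rw [SetLike.mem_coe, Submodule.mem_comap, trunc_monomial]
  split_ifs with h
  · exact D.monomial_mem_filtration h
  · exact zero_mem _

/-- Multiplication by the `i`-th generator on the integral form. -/
def integralIns (i : Fin n) : Module.End R D.integralForm :=
  (D.ins i).restrict (D.ins_mem_integralForm i)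

theorem serreElt_integralIns {i j : Fin n} (hij : i ≠ j) :
    serreElt (D.Q i i : R) (D.Q i j : R) (D.integralIns i) (D.integralIns j)
      (1 - A i j).toNat = 0 := by
  have h := comp_serreElt (ψ := D.integralForm.subtype) (X := D.integralIns i)
    (Y := D.integralIns j) (X' := D.ins i) (Y' := D.ins j) rfl rfl (D.Q i i) (D.Q i j)
    (1 - A i j).toNat
  rw [show serreElt _ _ (D.ins i) (D.ins j) _ = 0 from D.serreOp_eq_zero 0 hij,
    LinearMap.zero_comp] at h
  exact LinearMap.ext fun x => Subtype.ext (LinearMap.congr_fun h x)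

end IntegralForm

section Specialization

open PowerSeries

variable {k : Type*} [Field k] {n : ℕ} {A : Matrix (Fin n) (Fin n) ℤ}
  (D : CartanBraiding k⟦X⟧ A)

/-- The specialization at `X = 0` of the integral form. -/
abbrev Specialization : Type _ := QuotSMulTop (X : k⟦X⟧) D.integralForm

/-- The action of the `i`-th generator on the specialization. -/
def specIns (i : Fin n) : Module.End k⟦X⟧ D.Specialization := QuotSMulTop.map X (D.integralIns i)

/-- The class of a monomial in the specialization. -/
def specMonomial (u : List (Fin n)) : D.Specialization :=
  Submodule.Quotient.mk ⟨D.monomial u, D.monomial_mem_integralForm u⟩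

@[simp] theorem specMonomial_cons (i : Fin n) (u : List (Fin n)) :
    D.specMonomial (i :: u) = D.specIns i (D.specMonomial u) := rfl

theorem constantCoeff_smul (r : k⟦X⟧) (z : D.Specialization) : constantCoeff r • z = r • z := by
  obtain ⟨s, hs⟩ : X ∣ r - algebraMap k k⟦X⟧ (constantCoeff r) := by simp [X_dvd_iff]
  rw [← algebraMap_smul k⟦X⟧ (constantCoeff r) z, eq_comm, ← sub_eq_zero, ← sub_smul, hs, mul_smul]
  exact Module.mem_annihilator.1 (QuotSMulTop.mem_annihilator _ _) _

theorem serreElt_specIns {i j : Fin n} (hij : i ≠ j) :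
    serreElt (constantCoeff (D.Q i i : k⟦X⟧)) (constantCoeff (D.Q i j : k⟦X⟧)) (D.specIns i)
      (D.specIns j) (1 - A i j).toNat = 0 := by
  rw [serreElt_map fun r T => LinearMap.ext fun z => D.constantCoeff_smul r (T z)]
  have h := comp_serreElt (QuotSMulTop.map_comp_mkQ X (D.integralIns i)).symm
    (QuotSMulTop.map_comp_mkQ X (D.integralIns j)).symm (D.Q i i) (D.Q i j) (1 - A i j).toNat
  rw [D.serreElt_integralIns hij, LinearMap.comp_zero] at h
  exact (LinearMap.cancel_right (Submodule.mkQ_surjective _)).1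
    (h.symm.trans (LinearMap.zero_comp _).symm)

end Specialization

end CartanBraiding

namespace CartanBraiding

section SpecializationGrowth

open PowerSeries

variable {k : Type*} [Field k] {n : ℕ} {A : Matrix (Fin n) (Fin n) ℤ}
  (D : CartanBraiding k⟦X⟧ A)

/-- The classes of the elements of the filtration in the specialization. -/
def specFiltration (d : ℕ) : Submodule k D.Specialization :=
  Submodule.span k (D.specMonomial '' {u | u.length ≤ d})

instance finite_specFiltration (d : ℕ) : Module.Finite k (D.specFiltration d) :=
  Module.Finite.iff_fg.2 (Submodule.fg_span ((List.finite_length_le (Fin n) d).image _))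

theorem sub_mem_smul_filtration {d : ℕ} {x y : D.integralForm}
    (hx : (x : Sh k⟦X⟧ n) ∈ D.filtration d) (hy : (y : Sh k⟦X⟧ n) ∈ D.filtration d)
    (h : (Submodule.Quotient.mk x : D.Specialization) = Submodule.Quotient.mk y) :
    (x - y : Sh k⟦X⟧ n) ∈ Ideal.span {(X : k⟦X⟧)} • D.filtration d := by
  obtain ⟨z, -, hz⟩ := (Submodule.mem_smul_pointwise_iff_exists _ _ _).1
    ((Submodule.Quotient.eq _).1 h)
  rw [← D.trunc_eq_self (sub_mem hx hy), ← Submodule.coe_sub, ← hz, Submodule.coe_smul, map_smul]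
  exact Submodule.smul_mem_smul (Ideal.mem_span_singleton_self _) (D.trunc_mem_filtration d z.2)

theorem exists_mem_span_mk_eq {s : Set (List (Fin n))} {z : D.Specialization}
    (hz : z ∈ Submodule.span k (D.specMonomial '' s)) : ∃ y : D.integralForm,
      (y : Sh k⟦X⟧ n) ∈ Submodule.span k⟦X⟧ (D.monomial '' s) ∧ Submodule.Quotient.mk y = z := by
  induction hz using Submodule.span_induction with
  | mem z hz =>
    obtain ⟨u, hu, rfl⟩ := hz
    exact ⟨⟨_, D.monomial_mem_integralForm u⟩, Submodule.subset_span ⟨u, hu, rfl⟩, rfl⟩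
  | zero => exact ⟨0, zero_mem _, rfl⟩
  | add z z' _ _ ih ih' =>
    obtain ⟨y, hy, rfl⟩ := ih
    obtain ⟨y', hy', rfl⟩ := ih'
    exact ⟨y + y', add_mem hy hy', rfl⟩
  | smul c z _ ih =>
    obtain ⟨y, hy, rfl⟩ := ih
    exact ⟨algebraMap k k⟦X⟧ c • y, Submodule.smul_mem _ _ hy,
      by rw [Submodule.Quotient.mk_smul, algebraMap_smul]⟩

theorem filtration_le_span {d : ℕ} {s : Set (List (Fin n))} (hs : s ⊆ {u | u.length ≤ d})
    (hspan : D.specFiltration d ≤ Submodule.span k (D.specMonomial '' s)) :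
    D.filtration d ≤ Submodule.span k⟦X⟧ (D.monomial '' s) := by
  refine Submodule.le_of_le_smul_of_le_jacobson_bot (I := Ideal.span {(X : k⟦X⟧)})
    (D.filtration_fg d) ?_ (Submodule.span_le.2 ?_)
  · rw [IsLocalRing.jacobson_eq_maximalIdeal _ bot_ne_top, maximalIdeal_eq_span_X]
  · rintro _ ⟨v, hv, rfl⟩
    obtain ⟨y, hy, hyv⟩ := D.exists_mem_span_mk_eq (hspan (Submodule.subset_span ⟨v, hv, rfl⟩))
    rw [SetLike.mem_coe, ← add_sub_cancel (y : Sh k⟦X⟧ n) (D.monomial v)]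
    exact Submodule.add_mem_sup hy (D.sub_mem_smul_filtration (D.monomial_mem_filtration hv)
      (Submodule.span_mono (Set.image_mono hs) hy) hyv.symm)

theorem card_le_finrank_specFiltration {d : ℕ} {ι : Type*} [Fintype ι] {y : ι → Sh k⟦X⟧ n}
    (hy : LinearIndependent k⟦X⟧ y) (hyd : ∀ b, y b ∈ D.filtration d) :
    Fintype.card ι ≤ Module.finrank k (D.specFiltration d) := by
  classical
  have : Module.Finite k (Submodule.span k (D.specMonomial '' {u | u.length ≤ d})) :=
    D.finite_specFiltration d
  obtain ⟨f, hf, hspan, -⟩ :=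
    Submodule.exists_fun_fin_finrank_span_eq k (D.specMonomial '' {u | u.length ≤ d})
  choose u hu hfu using hf
  rw [← funext hfu, Set.range_comp' D.specMonomial] at hspan
  have hle := D.filtration_le_span (Set.range_subset_iff.2 hu) hspan.ge
  rw [← Set.range_comp] at hle
  refine (linearIndependent_le_span_aux' y hy _ ?_).trans
    ((Fintype.card_range_le (D.monomial ∘ u)).trans_eq (Fintype.card_fin _))
  rintro _ ⟨b, rfl⟩
  exact hle (hyd b)

variable {B : Type*} [Ring B] [Algebra k B] {φ : B →ₐ[k] Module.End k⟦X⟧ D.Specialization}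
  {x : Fin n → B}

theorem apply_prod_specMonomial_nil (hφ : ∀ i, φ (x i) = D.specIns i) (u : List (Fin n)) :
    φ (u.map x).prod (D.specMonomial []) = D.specMonomial u := by
  induction u with
  | nil => simp
  | cons i u ih => simp [hφ, ih]

theorem finrank_specFiltration_le (hφ : ∀ i, φ (x i) = D.specIns i) (d : ℕ) :
    Module.finrank k (D.specFiltration d) ≤
      Module.finrank k (Submodule.span k (insert 1 (Set.range x)) ^ d : Submodule k B) := by
  let ev : B →ₗ[k] D.Specialization :=
    { toFun b := φ b (D.specMonomial [])
      map_add' := by simp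
      map_smul' := by simp }
  have hfin : Module.Finite k (Submodule.span k (insert 1 (Set.range x)) ^ d : Submodule k B) :=
    Module.Finite.iff_fg.2 ((Submodule.fg_span ((Set.finite_range x).insert 1)).pow d)
  refine (Submodule.finrank_mono (Submodule.span_le.2 ?_)).trans (Submodule.finrank_map_le ev _)
  rintro _ ⟨u, hu, rfl⟩
  exact ⟨_, prod_map_mem_span_insert_one_pow x hu, D.apply_prod_specMonomial_nil hφ u⟩

theorem length_le_GKdim (hφ : ∀ i, φ (x i) = D.specIns i) {w : List (Fin n)}
    (hw : IsReducedWord A (Set.Ioi 0) w) : (w.length : ℝ≥0∞) ≤ GKdim k B := by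
  classical
  obtain ⟨N, hN⟩ := D.exists_linearIndependent hw
  refine natCast_le_GKdim_of_pow_le_finrank (Finset.univ.image x) (E := w.length * N)
    fun d K hd => ?_
  obtain ⟨y, hy, hyN⟩ := hN K
  have hcard := D.card_le_finrank_specFiltration hy fun b =>
    D.filtration_mono (b := d) (by nlinarith) (hyN b)
  rw [Fintype.card_fun, Fintype.card_fin, Fintype.card_fin] at hcard
  rw [Finset.coe_image, Finset.coe_univ, Set.image_univ]
  exact hcard.trans (D.finrank_specFiltration_le hφ d)

end SpecializationGrowth

end CartanBraiding

section QuantumSerreAlgebra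

open PowerSeries

variable {k : Type*} [Field k] {n : ℕ} {A : Matrix (Fin n) (Fin n) ℤ}

/-- The quantum Serre relations `(ad_c xᵢ) ^ (1 - Aᵢⱼ) xⱼ = 0`. -/
def QuantumSerreRel (A : Matrix (Fin n) (Fin n) ℤ) (Q : Fin n → Fin n → kˣ)
    (a b : FreeAlgebra k (Fin n)) : Prop :=
  b = 0 ∧ ∃ i j, i ≠ j ∧ a = (adIter Q i (1 - A i j).toNat (gen Q j)).1

/-- The algebra `B̆` of a braiding matrix, presented by the quantum Serre relations. -/
abbrev QuantumSerreAlgebra (A : Matrix (Fin n) (Fin n) ℤ) (Q : Fin n → Fin n → kˣ) : Type _ :=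
  RingQuot (QuantumSerreRel A Q)

theorem IsGCM.of_symmetrizable (hdiag : ∀ i, A i i = 2) (hoff : ∀ i j, i ≠ j → A i j ≤ 0)
    {d : Fin n → ℤ} (hd : ∀ i, 0 < d i) (hsym : ∀ i j, d i * A i j = d j * A j i) : IsGCM A where
  diag := hdiag
  nonpos := hoff
  zero_iff i j := by
    rw [← mul_eq_zero_iff_left (hd i).ne', hsym i j, mul_eq_zero_iff_left (hd j).ne']

theorem CartanBraiding.exists_quantumSerreAlgebra_algHom {Q : Fin n → Fin n → kˣ}
    (D : CartanBraiding k⟦X⟧ A) (hQ : ∀ i j, constantCoeff (D.Q i j : k⟦X⟧) = Q i j) :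
    ∃ φ : QuantumSerreAlgebra A Q →ₐ[k] Module.End k⟦X⟧ D.Specialization,
      ∀ i, φ (RingQuot.mkAlgHom k (QuantumSerreRel A Q) (FreeAlgebra.ι k i)) = D.specIns i := by
  refine ⟨RingQuot.liftAlgHom k ⟨FreeAlgebra.lift k D.specIns, ?_⟩, fun i => ?_⟩
  · rintro _ _ ⟨rfl, i, j, hij, rfl⟩
    rw [map_adIter, map_zero, ← hQ, ← hQ, FreeAlgebra.lift_ι_apply, FreeAlgebra.lift_ι_apply]
    exact D.serreElt_specIns hij
  · rw [RingQuot.liftAlgHom_mkAlgHom_apply, FreeAlgebra.lift_ι_apply]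

end QuantumSerreAlgebra

end Stmt16

theorem stmt16_general {k : Type*} [Field k] [CharZero k] {n : ℕ} {A : Matrix (Fin n) (Fin n) ℤ}
    (hdiag : ∀ i, A i i = 2) (hoff : ∀ i j, i ≠ j → A i j ≤ 0)
    {d : Fin n → ℤ} (hd : ∀ i, 0 < d i) (hsym : ∀ i j, d i * A i j = d j * A j i)
    {q : kˣ} {Q : Fin n → Fin n → kˣ} (hQd : ∀ i, Q i i = q ^ d i)
    (hQo : ∀ i j, i ≠ j → Q i j * Q j i = q ^ (d i * A i j)) {m : ℕ}
    (hm : (m : Cardinal) ≤ Module.rank k (SerreAlgebra k A)) :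
    (m : ℝ≥0∞) ≤ GKdim k (QuantumSerreAlgebra A Q) := by
  have hA := IsGCM.of_symmetrizable hdiag hoff hd hsym
  have hgrad := SerreAlgebra.isReflectionGrading_weightSpace (k := k) hA
  obtain ⟨w, hw, hlen⟩ := hgrad.exists_isReducedWord hdiag m
  obtain ⟨D, hQ⟩ := CartanBraiding.exists_constantCoeff_eq hA hd hsym hQd hQo
  obtain ⟨φ, hφ⟩ := D.exists_quantumSerreAlgebra_algHom hQ
  have hmw : m ≤ w.length := hlen.elim Eq.ge fun h => Nat.cast_le.1 (hm.trans h)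
  exact (Nat.cast_le.2 hmw).trans (D.length_le_GKdim hφ (hw.mono hgrad.pos))

/-- Let `a = (a_ij)` be a symmetrizable indecomposable generalized
Cartan matrix with symmetrizer `d`, `g = g(a)` the associated Kac–Moody algebra, and
`q ∈ kˣ`, `Q` a braiding matrix with `Q_ii = q^{d_i}` and `Q_ij Q_ji = q^{d_i a_ij}`.
Let `B̆ = T(V)/⟨(ad_c x_i)^{1−a_ij} x_j : i ≠ j⟩`.  Then `GKdim B̆ ≥ dim g⁺`, where
`g⁺` (the positive part of `g`) is the quotient of the free Lie algebra on `e_1,…,e_n`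
by the Lie ideal generated by the Serre elements `(ad e_i)^{1−a_ij}(e_j)`.
(The inequality `GKdim ≥ dim g⁺` is expressed by: every natural number bounded by
`dim g⁺` also bounds `GKdim B̆`.) -/
theorem stmt16 {k : Type*} [Field k] [CharZero k] {n : ℕ} (hn : 0 < n)
    (A : Matrix (Fin n) (Fin n) ℤ)
    (hdiag : ∀ i, A i i = 2)
    (hoff : ∀ i j, i ≠ j → A i j ≤ 0)
    (hzero : ∀ i j, A i j = 0 ↔ A j i = 0)
    (hindec : ∀ S : Set (Fin n), (∀ i ∈ S, ∀ j, j ∉ S → A i j = 0) → S = ∅ ∨ S = Set.univ)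
    (d : Fin n → ℤ) (hd : ∀ i, 0 < d i)
    (hsym : ∀ i j, d i * A i j = d j * A j i)
    (q : kˣ) (Q : Fin n → Fin n → kˣ)
    (hQd : ∀ i, Q i i = q ^ d i)
    (hQo : ∀ i j, i ≠ j → Q i j * Q j i = q ^ (d i * A i j))
    (rel : FreeAlgebra k (Fin n) → FreeAlgebra k (Fin n) → Prop)
    (hrel : rel = fun a b => b = 0 ∧
      ∃ i j, i ≠ j ∧ a = (adIter Q i (1 - A i j).toNat (gen Q j)).1)
    (I : LieIdeal k (FreeLieAlgebra k (Fin n)))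
    (hI : I = LieSubmodule.lieSpan k (FreeLieAlgebra k (Fin n))
      {x | ∃ i j, i ≠ j ∧
        x = ((LieAlgebra.ad k (FreeLieAlgebra k (Fin n)) (FreeLieAlgebra.of k i))
              ^ (1 - A i j).toNat) (FreeLieAlgebra.of k j)}) :
    ∀ m : ℕ, (m : Cardinal) ≤ Module.rank k (FreeLieAlgebra k (Fin n) ⧸ I) →
      (m : ℝ≥0∞) ≤ GKdim k (RingQuot rel) := by
  subst hrel hI
  exact fun m => stmt16_general hdiag hoff hd hsym hQd hQo

end
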